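/- Let Φ be a generic alternating 2n×2n matrix and v a generic column vector of size 2n, over the polynomial ring A = ℤ[x_{ij}, y_i]. The Huneke–Ulrich ideal J generated by Pf(Φ) together with the 2n entries of Φv has grade 2n-1, is minimally generated by 2n+1 elements, and A/J is Gorenstein. -/

import Mathlib

open Finset in
/-- The set of permutations of `Fin (2*n)` giving normalized perfect matchings. -/
noncomputable def pfPerms (n : ℕ) : Finset (Equiv.Perm (Fin (2*n))) :=
  Finset.univ.filter (fun σ =>
    (∀ i : Fin n, σ ⟨2*i, by omega⟩ < σ ⟨2*i+1, by omega⟩) ∧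
    (∀ i j : Fin n, i < j → σ ⟨2*(i:ℕ), by omega⟩ < σ ⟨2*(j:ℕ), by omega⟩))

/-- The Pfaffian of a `2n × 2n` matrix, as the signed sum over perfect matchings. -/
noncomputable def pfaffian {R : Type*} [CommRing R] {n : ℕ}
    (A : Matrix (Fin (2*n)) (Fin (2*n)) R) : R :=
  ∑ σ ∈ pfPerms n, (Equiv.Perm.sign σ : ℤ) •
    ∏ i : Fin n, A (σ ⟨2*i, by omega⟩) (σ ⟨2*i+1, by omega⟩)

variable {R : Type*} [CommRing R]

open RingTheory.Sequence in
/-- The ideal `I` has grade `g`: `I` contains a regular sequence of length `g`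
but none of length `g+1`. -/
def gradeIs (R : Type*) [CommRing R] (I : Ideal R) (g : ℕ) : Prop :=
  (∃ rs : List R, rs.length = g ∧ (∀ x ∈ rs, x ∈ I) ∧ IsRegular R rs) ∧
  ¬ ∃ rs : List R, rs.length = g + 1 ∧ (∀ x ∈ rs, x ∈ I) ∧ IsRegular R rs

open RingTheory.Sequence IsLocalRing in
/-- A local ring is Cohen–Macaulay if its depth (the length of a maximal regular
sequence in the maximal ideal) equals its Krull dimension. -/
def IsCMLocalRing (R : Type*) [CommRing R] [IsLocalRing R] : Prop :=
  ∃ d : ℕ, (∃ rs : List R, rs.length = d ∧ (∀ x ∈ rs, x ∈ maximalIdeal R) ∧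
    IsRegular R rs) ∧ ringKrullDim R = d

open RingTheory.Sequence IsLocalRing in
/-- A finitely generated module `M` over a Noetherian local ring is Cohen–Macaulay if
its depth equals its Krull dimension `dim (R / ann M)`. -/
def IsCMModule (R : Type*) [CommRing R] [IsLocalRing R] (M : Type*) [AddCommGroup M]
    [Module R M] : Prop :=
  ∃ d : ℕ, (∃ rs : List R, rs.length = d ∧ (∀ x ∈ rs, x ∈ maximalIdeal R) ∧
    IsRegular M rs) ∧ ringKrullDim (R ⧸ Module.annihilator R M) = d

open CategoryTheory in
/-- The Ext module `Ext^i_R(M, N)`, as an object of `ModuleCat R`. -/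
noncomputable def ExtMod (R : Type) [CommRing R]
    (M N : Type) [AddCommGroup M] [Module R M] [AddCommGroup N] [Module R N]
    (i : ℕ) : ModuleCat R :=
  ((Ext R (ModuleCat R) i).obj (Opposite.op (ModuleCat.of R M))).obj (ModuleCat.of R N)

open IsLocalRing in
/-- A Noetherian local ring `R` with residue field `k` is Gorenstein if
`Ext^i(k, R) = 0` for `i ≠ d` and `Ext^d(k, R) ≅ k`, for some `d`. -/
def IsGorensteinLocalRing (R : Type) [CommRing R] [IsLocalRing R] : Prop :=
  ∃ d : ℕ,
    (∀ i : ℕ, i ≠ d → Subsingleton (ExtMod R (ResidueField R) R i)) ∧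
    Nonempty (ExtMod R (ResidueField R) R d ≃ₗ[R] ResidueField R)

/-- The polynomial ring `ℤ[x_{ij}, y_i]` for the Huneke–Ulrich ideal: variables
`x_{ij}` for the generic alternating `2n × 2n` matrix and `y_i` for the generic
vector. -/
abbrev HURing (n : ℕ) : Type :=
  MvPolynomial ({p : Fin (2*n) × Fin (2*n) // p.1 < p.2} ⊕ Fin (2*n)) ℤ

/-- The generic alternating `2n × 2n` matrix `Φ`. -/
noncomputable def huPhi (n : ℕ) : Matrix (Fin (2*n)) (Fin (2*n)) (HURing n) :=
  Matrix.of fun i j =>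
    if h : i < j then MvPolynomial.X (Sum.inl ⟨(i, j), h⟩)
    else if h' : j < i then - MvPolynomial.X (Sum.inl ⟨(j, i), h'⟩) else 0

/-- The generic vector `v`. -/
noncomputable def huV (n : ℕ) : Fin (2*n) → HURing n :=
  fun i => MvPolynomial.X (Sum.inr i)

/-- The `2n+1` generators of the Huneke–Ulrich ideal: the entries of `Φv` followed
by `Pf(Φ)`. -/
noncomputable def huGens (n : ℕ) : Fin (2*n+1) → HURing n :=
  Fin.snoc ((huPhi n).mulVec (huV n)) (pfaffian (huPhi n))

/-- The Huneke–Ulrich deviation-2 ideal `J = (Pf(Φ)) + (entries of Φv)`. -/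
noncomputable def huIdeal (n : ℕ) : Ideal (HURing n) :=
  Ideal.span (Set.range (huGens n))

/-!
Number rows and columns from the last one, and attach to the leading block of size `p` the ideal
`J_p` generated by the Pfaffian of the block, the first `p` entries of `Φv` and the entries `v_j`
with `j ≥ p`, so that `J_0 = (1)` and `J_{2n} = J`. Expanding Pfaffians shows that `J_{p+1}` is the
colon ideal `S_p : v_p`, where `S_p` is generated by the first `p` entries of `Φv` and the `v_j`
with `j > p`. A simultaneous induction proves this together with the regularity of `v_p` modulo
`J_{p+1}`; here every regularity statement reduces to the linearity of the forms
in one further variable.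

* Grade: `S_{2n-1} ⊆ J` is generated by a regular sequence of length `2n - 1`, and has the same
  localization as `J` wherever `v_{2n-1}` is invertible, so `J` has height at most `2n - 1`.
* Minimal generators: for each of the `2n + 1` generators there is a monomial minimal among those
  occurring in `J` which occurs in this generator only, with coefficient `±1`. Hence the generators
  are linearly independent modulo the terms contributed by the maximal ideal.
* Gorenstein: after localization, the exact sequences `0 → Λ/(I : y) → Λ/I → Λ/(I + (y)) → 0` along
  the linkage bound the length of `Ext^i(k, Λ/J)` by that of `Ext^i(k, Λ/S_{2n-1})`, where `Λ` is a
  regular local ring. So `Λ/J` has depth equal to its dimension and a socle of length one modulo a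
  maximal regular sequence.
-/

section Pfaffian

variable {ι : Type*}

/-- The alternating sum `∑ₖ (-1)ᵏ w(lₖ) f(l without lₖ)`, as in the Laplace expansion of a
determinant or Pfaffian whose rows are indexed by a list. -/
def laplaceSum (w : ι → R) (f : List ι → R) (l : List ι) : R :=
  ∑ k : Fin l.length, (-1) ^ (k : ℕ) * w l[k] * f (l.eraseIdx k)

/-- The Pfaffian of the alternating matrix with entries `x l[i] l[j]`, defined by expansion along
its first row. Lists of indices make it possible to expand minors repeatedly. -/
def listPfaffian (x : ι → ι → R) : List ι → R
  | [] => 1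
  | a :: l => ∑ k : Fin l.length, (-1) ^ (k : ℕ) * x a l[k] * listPfaffian x (l.eraseIdx k)
termination_by l => l.length
decreasing_by grind

@[simp] lemma laplaceSum_nil (w : ι → R) (f : List ι → R) : laplaceSum w f [] = 0 := by
  simp [laplaceSum]

lemma laplaceSum_cons (w : ι → R) (f : List ι → R) (b : ι) (l : List ι) :
    laplaceSum w f (b :: l) = w b * f l - laplaceSum w (fun l' ↦ f (b :: l')) l := by
  simp [laplaceSum, Fin.sum_univ_succ, pow_succ, sub_eq_add_neg]

lemma laplaceSum_congr (w : ι → R) {f g : List ι → R} {l : List ι}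
    (h : ∀ l' : List ι, l'.length + 1 = l.length → f l' = g l') :
    laplaceSum w f l = laplaceSum w g l :=
  Finset.sum_congr rfl fun k _ ↦ by rw [h _ (List.length_eraseIdx_add_one k.isLt)]

lemma laplaceSum_sub (w : ι → R) (f g : List ι → R) (l : List ι) :
    laplaceSum w (fun l ↦ f l - g l) l = laplaceSum w f l - laplaceSum w g l := by
  simp [laplaceSum, mul_sub]

lemma laplaceSum_const_mul (w : ι → R) (c : R) (f : List ι → R) (l : List ι) :
    laplaceSum w (fun l ↦ c * f l) l = c * laplaceSum w f l := by
  simp [laplaceSum, Finset.mul_sum, mul_left_comm]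

lemma laplaceSum_neg_right (w : ι → R) (f : List ι → R) (l : List ι) :
    laplaceSum w (fun l ↦ -f l) l = -laplaceSum w f l := by
  simp [laplaceSum]

lemma laplaceSum_sum_left {κ : Type*} (s : Finset κ) (c : κ → R) (w : κ → ι → R)
    (f : List ι → R) (l : List ι) :
    laplaceSum (fun b ↦ ∑ a ∈ s, c a * w a b) f l = ∑ a ∈ s, c a * laplaceSum (w a) f l := by
  simp only [laplaceSum, Finset.mul_sum, Finset.sum_mul]
  rw [Finset.sum_comm]
  exact Finset.sum_congr rfl fun a _ ↦ Finset.sum_congr rfl fun k _ ↦ by ring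

lemma laplaceSum_neg_left (w : ι → R) (f : List ι → R) (l : List ι) :
    laplaceSum (fun b ↦ -w b) f l = -laplaceSum w f l := by
  simp [laplaceSum]

lemma laplaceSum_comm (w u : ι → R) (f : List ι → R) (l : List ι) :
    laplaceSum w (laplaceSum u f) l = -laplaceSum u (laplaceSum w f) l := by
  induction l generalizing f with
  | nil => simp
  | cons b l ih => simp only [laplaceSum_cons, laplaceSum_sub, laplaceSum_const_mul, ih]; ring

lemma laplaceSum_self (w : ι → R) (f : List ι → R) (l : List ι) :
    laplaceSum w (laplaceSum w f) l = 0 := by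
  induction l generalizing f with
  | nil => simp
  | cons b l ih => simp only [laplaceSum_cons, laplaceSum_sub, laplaceSum_const_mul, ih]; ring

lemma laplaceSum_swap (w : ι → R) {f : List ι → R} {a b : ι} (l₁ l₂ : List ι)
    (hf : ∀ m₁ m₂, m₁.length + m₂.length < l₁.length + l₂.length →
      f (m₁ ++ a :: b :: m₂) = -f (m₁ ++ b :: a :: m₂)) :
    laplaceSum w f (l₁ ++ a :: b :: l₂) = -laplaceSum w f (l₁ ++ b :: a :: l₂) := by
  induction l₁ generalizing f with
  | nil =>
    have hswap : laplaceSum w (fun l ↦ f (a :: b :: l)) l₂ =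
        laplaceSum w (fun l ↦ -f (b :: a :: l)) l₂ :=
      laplaceSum_congr w fun l hl ↦ hf [] l (by simp; omega)
    simp only [List.nil_append, laplaceSum_cons, hswap, laplaceSum_neg_right]
    ring
  | cons c l₁ ih =>
    have htail := ih (f := fun l ↦ f (c :: l)) fun m₁ m₂ hm ↦ hf (c :: m₁) m₂ (by simp; omega)
    simp only [List.cons_append, laplaceSum_cons, htail, hf l₁ l₂ (by simp)]
    ring

lemma laplaceSum_mem (I : Ideal R) {w : ι → R} (f : List ι → R) {l : List ι}
    (hw : ∀ b ∈ l, w b ∈ I) : laplaceSum w f l ∈ I :=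
  I.sum_mem fun _ _ ↦ I.mul_mem_right _ (I.mul_mem_left _ (hw _ (List.getElem_mem _)))

lemma laplaceSum_mem_subring {T : Type*} [SetLike T R] [SubringClass T R] (A : T) {w : ι → R}
    {f : List ι → R} {l : List ι} (hw : ∀ b ∈ l, w b ∈ A)
    (hf : ∀ k < l.length, f (l.eraseIdx k) ∈ A) : laplaceSum w f l ∈ A :=
  sum_mem fun k _ ↦ mul_mem (mul_mem (pow_mem (neg_mem (one_mem A)) _)
    (hw _ (List.getElem_mem _))) (hf k k.isLt)

lemma laplaceSum_ofFn {n : ℕ} (w : ι → R) (f : List ι → R) (v : Fin (n + 1) → ι) :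
    laplaceSum w f (List.ofFn v) =
      ∑ k : Fin (n + 1), (-1) ^ (k : ℕ) * w (v k) * f (List.ofFn (v ∘ k.succAbove)) := by
  induction n generalizing f with
  | zero => simp [laplaceSum_cons]
  | succ n ih =>
    rw [List.ofFn_succ, laplaceSum_cons, ih, Fin.sum_univ_succ (n := n + 1)]
    simp [pow_succ, Function.comp_def, sub_eq_add_neg]

@[simp] lemma listPfaffian_nil (x : ι → ι → R) : listPfaffian x [] = 1 := by
  rw [listPfaffian]

lemma listPfaffian_cons (x : ι → ι → R) (a : ι) (l : List ι) :
    listPfaffian x (a :: l) = laplaceSum (x a) (listPfaffian x) l := by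
  rw [listPfaffian, laplaceSum]

lemma listPfaffian_of_odd (x : ι → ι → R) : ∀ l : List ι, Odd l.length → listPfaffian x l = 0
  | [], h => by simp at h
  | a :: l, h => by
    rw [listPfaffian_cons]
    refine Finset.sum_eq_zero fun k _ ↦ ?_
    have hlen := List.length_eraseIdx_add_one k.isLt
    rw [listPfaffian_of_odd x (l.eraseIdx k) (by grind), mul_zero]
termination_by l => l.length
decreasing_by grind

variable {x : ι → ι → R}

lemma listPfaffian_swap (hx : ∀ a b, x a b = -x b a) (a b : ι) (l₁ l₂ : List ι) :
    listPfaffian x (l₁ ++ a :: b :: l₂) = -listPfaffian x (l₁ ++ b :: a :: l₂) := by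
  induction hN : l₁.length + l₂.length using Nat.strong_induction_on generalizing l₁ l₂ with
  | _ N ih =>
    cases l₁ with
    | nil =>
      simp only [List.nil_append, listPfaffian_cons, laplaceSum_cons]
      rw [laplaceSum_comm, hx a b]
      ring
    | cons c l₁ =>
      simp only [List.cons_append, listPfaffian_cons]
      refine laplaceSum_swap _ _ _ fun m₁ m₂ hm ↦ ih _ ?_ m₁ m₂ rfl
      simp only [List.length_cons] at hN
      omega

lemma listPfaffian_append_cons (hx : ∀ a b, x a b = -x b a) (a : ι) (l₁ l₂ : List ι) :
    listPfaffian x (l₁ ++ a :: l₂) = (-1) ^ l₁.length * listPfaffian x (a :: (l₁ ++ l₂)) := by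
  induction l₁ using List.reverseRecOn generalizing l₂ with
  | nil => simp
  | append_singleton l₁ c ih =>
    rw [List.append_assoc, List.singleton_append, listPfaffian_swap hx, ih, List.append_assoc,
      List.singleton_append, List.length_append, List.length_singleton, pow_succ]
    ring

lemma listPfaffian_cons_of_mem (hx : ∀ a b, x a b = -x b a) {a : ι} (ha : x a a = 0)
    {l : List ι} (hl : a ∈ l) : listPfaffian x (a :: l) = 0 := by
  obtain ⟨l₁, l₂, rfl⟩ := List.append_of_mem hl
  have hpair : listPfaffian x (a :: a :: (l₁ ++ l₂)) = 0 := by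
    simp only [listPfaffian_cons, laplaceSum_cons, ha, laplaceSum_self]
    ring
  rw [← List.cons_append, listPfaffian_append_cons hx, List.cons_append, hpair, mul_zero]

lemma sum_mul_listPfaffian_cons (hx : ∀ a b, x a b = -x b a) (s : Finset ι) (y : ι → R)
    (l : List ι) :
    ∑ a ∈ s, y a * listPfaffian x (a :: l) =
      -laplaceSum (fun b ↦ ∑ a ∈ s, x b a * y a) (listPfaffian x) l := by
  simp only [← laplaceSum_neg_left, listPfaffian_cons, ← laplaceSum_sum_left]
  congr 1
  ext b
  rw [← Finset.sum_neg_distrib]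
  exact Finset.sum_congr rfl fun a _ ↦ by rw [hx a b]; ring

lemma listPfaffian_mem_of_entries_mem {T : Type*} [SetLike T R] [SubringClass T R] (A : T) :
    ∀ l : List ι, (∀ a ∈ l, ∀ b ∈ l, x a b ∈ A) → listPfaffian x l ∈ A
  | [], _ => by simp [one_mem]
  | a :: l, h => by
    rw [listPfaffian_cons]
    refine laplaceSum_mem_subring A (fun b hb ↦ h a List.mem_cons_self b
      (List.mem_cons_of_mem _ hb)) fun k _ ↦ ?_
    exact listPfaffian_mem_of_entries_mem A (l.eraseIdx k) fun b hb c hc ↦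
      h b (List.mem_cons_of_mem _ (List.mem_of_mem_eraseIdx hb)) c
        (List.mem_cons_of_mem _ (List.mem_of_mem_eraseIdx hc))
termination_by l => l.length
decreasing_by grind

end Pfaffian

section MatchingPermutations

variable {n : ℕ} (k : Fin (2 * n + 1)) (ρ : Equiv.Perm (Fin (2 * n)))

lemma apply_zero_of_mem_pfPerms {σ : Equiv.Perm (Fin (2 * (n + 1)))} (hσ : σ ∈ pfPerms (n + 1)) :
    σ (0 : Fin (2 * n + 2)) = (0 : Fin (2 * n + 2)) := by
  simp only [pfPerms, Finset.mem_filter, Finset.mem_univ, true_and] at hσ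
  obtain ⟨hpair, hfirst⟩ := hσ
  obtain ⟨p, hp⟩ := σ.surjective (0 : Fin (2 * n + 2))
  have not_lt_apply (q : Fin (2 * (n + 1))) : ¬ σ q < σ p := by
    rw [hp]
    exact Nat.not_lt_zero _
  obtain ⟨i, hi | hi⟩ : ∃ i : Fin (n + 1),
      p = ⟨2 * i, by omega⟩ ∨ p = ⟨2 * i + 1, by omega⟩ :=
    ⟨⟨p / 2, by omega⟩, by simp only [Fin.ext_iff]; omega⟩
  · obtain rfl | hpos := (Fin.zero_le i).eq_or_lt
    · rwa [hi] at hp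
    · exact absurd (hi ▸ hfirst 0 i hpos) (not_lt_apply _)
  · exact absurd (hi ▸ hpair i) (not_lt_apply _)

/-- The permutation of `Fin (2 * (n + 1))` fixing `0`, sending `1` to `k + 1` and given by `ρ`
on the remaining entries: it adds the pair `{0, k + 1}` to the perfect matching `ρ`. -/
def extendPerm : Equiv.Perm (Fin (2 * (n + 1))) :=
  Equiv.Perm.decomposeFin.symm (0, k.cycleRange⁻¹ * Equiv.Perm.decomposeFin.symm (0, ρ))

lemma extendPerm_zero : extendPerm k ρ (0 : Fin (2 * n + 2)) = (0 : Fin (2 * n + 2)) :=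
  Equiv.Perm.decomposeFin_symm_apply_zero (n := 2 * n + 1) 0 _

lemma extendPerm_succ (i : Fin (2 * n + 1)) :
    extendPerm k ρ i.succ =
      ((k.cycleRange⁻¹ * Equiv.Perm.decomposeFin.symm (0, ρ) : Equiv.Perm _) i).succ :=
  Equiv.Perm.decomposeFin_symm_apply_succ (n := 2 * n + 1) _ 0 i

lemma extendPerm_one : extendPerm k ρ (1 : Fin (2 * n + 2)) = k.succ :=
  (extendPerm_succ k ρ 0).trans (by simp [Equiv.Perm.inv_def])

lemma extendPerm_succ_succ (i : Fin (2 * n)) :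
    extendPerm k ρ i.succ.succ = (k.succAbove (ρ i)).succ :=
  (extendPerm_succ k ρ i.succ).trans (by simp [Equiv.Perm.inv_def])

lemma extendPerm_two_mul_zero :
    extendPerm k ρ ⟨2 * ((0 : Fin (n + 1)) : ℕ), by simp⟩ = (0 : Fin (2 * n + 2)) :=
  extendPerm_zero k ρ

lemma extendPerm_two_mul_zero_add_one :
    extendPerm k ρ ⟨2 * ((0 : Fin (n + 1)) : ℕ) + 1, by simp; omega⟩ = k.succ :=
  extendPerm_one k ρ

lemma extendPerm_two_mul_succ (i : Fin n) :
    extendPerm k ρ ⟨2 * (i.succ : ℕ), by omega⟩ = (k.succAbove (ρ ⟨2 * i, by omega⟩)).succ :=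
  extendPerm_succ_succ k ρ ⟨2 * i, by omega⟩

lemma extendPerm_two_mul_succ_add_one (i : Fin n) :
    extendPerm k ρ ⟨2 * (i.succ : ℕ) + 1, by omega⟩ =
      (k.succAbove (ρ ⟨2 * i + 1, by omega⟩)).succ :=
  extendPerm_succ_succ k ρ ⟨2 * i + 1, by omega⟩

lemma sign_extendPerm :
    Equiv.Perm.sign (extendPerm k ρ) = (-1) ^ (k : ℕ) * Equiv.Perm.sign ρ := by
  rw [extendPerm]
  refine (Equiv.Perm.decomposeFin.symm_sign (n := 2 * n + 1) 0 _).trans ?_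
  simp [Fin.sign_cycleRange]

variable (n) in
lemma extendPerm_injective :
    Function.Injective fun p : Fin (2 * n + 1) × Equiv.Perm (Fin (2 * n)) ↦
      extendPerm p.1 p.2 := by
  rintro ⟨k, ρ⟩ ⟨k', ρ'⟩ h
  obtain rfl : k = k' := by
    have := congrArg (fun σ : Equiv.Perm (Fin (2 * (n + 1))) ↦ σ (1 : Fin (2 * n + 2))) h
    simpa only [extendPerm_one, Fin.succ_inj] using this
  simpa [extendPerm] using h

lemma exists_extendPerm_eq {σ : Equiv.Perm (Fin (2 * (n + 1)))}
    (hσ : σ (0 : Fin (2 * n + 2)) = (0 : Fin (2 * n + 2))) : ∃ k ρ, extendPerm k ρ = σ := by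
  obtain ⟨⟨p, τ⟩, rfl⟩ := (Equiv.Perm.decomposeFin (n := 2 * n + 1)).symm.surjective σ
  obtain rfl : p = 0 := by
    rw [← hσ]
    exact (Equiv.Perm.decomposeFin_symm_apply_zero (n := 2 * n + 1) p _).symm
  obtain ⟨⟨q, ρ⟩, hρ⟩ := (Equiv.Perm.decomposeFin (n := 2 * n)).symm.surjective
    ((τ 0).cycleRange * τ)
  obtain rfl : q = 0 := by
    rw [← Equiv.Perm.decomposeFin_symm_apply_zero (n := 2 * n) q ρ, hρ]
    simp
  exact ⟨τ 0, ρ, by rw [extendPerm, hρ, inv_mul_cancel_left]⟩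

lemma extendPerm_mem_pfPerms_iff : extendPerm k ρ ∈ pfPerms (n + 1) ↔ ρ ∈ pfPerms n := by
  have hlt (a b : Fin (2 * n)) : (k.succAbove a).succ < (k.succAbove b).succ ↔ a < b := by
    rw [Fin.succ_lt_succ_iff, (Fin.strictMono_succAbove k).lt_iff_lt]
  have hpos (a : Fin (2 * n + 1)) : (0 : Fin (2 * n + 2)) < a.succ := Fin.succ_pos a
  simp only [pfPerms, Finset.mem_filter, Finset.mem_univ, true_and, Fin.forall_fin_succ,
    extendPerm_two_mul_zero, extendPerm_two_mul_zero_add_one, extendPerm_two_mul_succ,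
    extendPerm_two_mul_succ_add_one, hlt, Fin.succ_lt_succ_iff]
  simp [hpos]

lemma prod_extendPerm (A : Matrix (Fin (2 * (n + 1))) (Fin (2 * (n + 1))) R) :
    ∏ i : Fin (n + 1),
        A (extendPerm k ρ ⟨2 * i, by omega⟩) (extendPerm k ρ ⟨2 * i + 1, by omega⟩) =
      A (0 : Fin (2 * n + 2)) k.succ *
        ∏ i : Fin n, A (k.succAbove (ρ ⟨2 * i, by omega⟩)).succ
          (k.succAbove (ρ ⟨2 * i + 1, by omega⟩)).succ := by
  simp only [Fin.prod_univ_succ, extendPerm_two_mul_zero, extendPerm_two_mul_zero_add_one,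
    extendPerm_two_mul_succ, extendPerm_two_mul_succ_add_one]

lemma pfaffian_succ (A : Matrix (Fin (2 * (n + 1))) (Fin (2 * (n + 1))) R) :
    pfaffian A = ∑ k : Fin (2 * n + 1), (-1) ^ (k : ℕ) * A (0 : Fin (2 * n + 2)) k.succ *
      pfaffian (A.submatrix (fun i ↦ (k.succAbove i).succ) (fun i ↦ (k.succAbove i).succ)) := by
  simp only [pfaffian, Finset.mul_sum]
  rw [← Finset.sum_product']
  symm
  refine Finset.sum_bij (fun p _ ↦ extendPerm p.1 p.2)
    (fun p hp ↦ (extendPerm_mem_pfPerms_iff p.1 p.2).mpr (Finset.mem_product.mp hp).2)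
    (fun p _ q _ h ↦ extendPerm_injective n h) (fun σ hσ ↦ ?_) (fun p _ ↦ ?_)
  · obtain ⟨k, ρ, rfl⟩ := exists_extendPerm_eq (apply_zero_of_mem_pfPerms hσ)
    exact ⟨(k, ρ), by simpa using (extendPerm_mem_pfPerms_iff k ρ).mp hσ, rfl⟩
  · rw [prod_extendPerm, sign_extendPerm]
    simp only [Matrix.submatrix_apply, zsmul_eq_mul]
    push_cast
    ring

lemma pfaffian_eq_listPfaffian {ι : Type*} (x : ι → ι → R) (v : Fin (2 * n) → ι) :
    pfaffian (Matrix.of fun i j ↦ x (v i) (v j)) = listPfaffian x (List.ofFn v) := by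
  induction n with
  | zero => simp [pfaffian, pfPerms, Finset.filter_true_of_mem]
  | succ n ih =>
    rw [pfaffian_succ]
    change _ = listPfaffian x (List.ofFn (n := 2 * n + 2) v)
    rw [List.ofFn_succ, listPfaffian_cons, laplaceSum_ofFn]
    exact Finset.sum_congr rfl fun k _ ↦ congrArg _ (ih _)

end MatchingPermutations

section VariableElimination

open MvPolynomial

section Ring

variable {I : Ideal R} {a b y g : R}

lemma isSMulRegular_quotient_iff_forall_mul_mem :
    IsSMulRegular (R ⧸ I) a ↔ ∀ f, a * f ∈ I → f ∈ I :=
  isSMulRegular_quotient_iff_mem_of_smul_mem I a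

lemma isSMulRegular_quotient_congr (h : a - b ∈ I) (ha : IsSMulRegular (R ⧸ I) a) :
    IsSMulRegular (R ⧸ I) b := by
  rw [isSMulRegular_quotient_iff_forall_mul_mem] at ha ⊢
  refine fun f hf ↦ ha f ?_
  rw [show a * f = (a - b) * f + b * f by ring]
  exact add_mem (I.mul_mem_right _ h) hf

lemma isSMulRegular_quotient_neg (ha : IsSMulRegular (R ⧸ I) a) :
    IsSMulRegular (R ⧸ I) (-a) := by
  rw [isSMulRegular_quotient_iff_forall_mul_mem] at *
  exact fun f hf ↦ ha f (by simpa using neg_mem hf)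

lemma isSMulRegular_quotient_sup_span_singleton (hy : IsSMulRegular (R ⧸ I) y)
    (hg : IsSMulRegular (R ⧸ (I ⊔ Ideal.span {y})) g) :
    IsSMulRegular (R ⧸ (I ⊔ Ideal.span {g})) y := by
  simp only [isSMulRegular_quotient_iff_forall_mul_mem, sup_comm I,
    Ideal.mem_span_singleton_sup] at *
  rintro f ⟨c, i, hi, h⟩
  obtain ⟨d, j, hj, rfl⟩ := hg c ⟨f, -i, neg_mem hi, by linear_combination -h⟩
  refine ⟨d, f - d * g, hy _ ?_, by ring⟩
  rw [show y * (f - d * g) = i + j * g by linear_combination -h]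
  exact add_mem hi (I.mul_mem_right _ hj)

lemma isSMulRegular_C_mul_X_add_C (ha : IsSMulRegular R a) :
    IsSMulRegular (Polynomial R) (Polynomial.C a * Polynomial.X + Polynomial.C b) := by
  refine .of_right_eq_zero_of_smul fun F h ↦ ?_
  rw [← Polynomial.leadingCoeff_eq_zero]
  refine ha.right_eq_zero_of_smul ?_
  simpa [add_mul, mul_assoc, Polynomial.coeff_X_mul] using
    congrArg (Polynomial.coeff · (F.natDegree + 1)) h

end Ring

variable {σ : Type*}

lemma X_mem_supported_compl {s t : σ} (h : t ≠ s) :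
    (X t : MvPolynomial σ R) ∈ supported R {s}ᶜ :=
  Algebra.subset_adjoin ⟨t, h, rfl⟩

open Classical in
/-- Reduction modulo the ideal `I` of all variables except `s`, which becomes the variable of a
polynomial ring over the quotient. -/
noncomputable def mkExcept (s : σ) (I : Ideal (MvPolynomial σ R)) :
    MvPolynomial σ R →ₐ[R] Polynomial (MvPolynomial σ R ⧸ I) :=
  aeval fun t ↦ if t = s then Polynomial.X else Polynomial.C (Ideal.Quotient.mk I (X t))

variable {s : σ} {I : Ideal (MvPolynomial σ R)}

lemma mkExcept_X_self : mkExcept s I (X s) = Polynomial.X := by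
  simp [mkExcept]

lemma mkExcept_of_mem_supported {f : MvPolynomial σ R} (hf : f ∈ supported R {s}ᶜ) :
    mkExcept s I f = Polynomial.C (Ideal.Quotient.mk I f) := by
  induction hf using Algebra.adjoin_induction with
  | mem x hx =>
    obtain ⟨t, ht, rfl⟩ := hx
    rw [mkExcept, aeval_X, if_neg (by simpa using ht)]
  | algebraMap r => exact AlgHom.commutes _ _
  | add x y _ _ hx hy => rw [map_add, hx, hy, map_add, map_add]
  | mul x y _ _ hx hy => rw [map_mul, hx, hy, map_mul, map_mul]

lemma eval_mkExcept (f : MvPolynomial σ R) :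
    (mkExcept s I f).eval (Ideal.Quotient.mk I (X s)) = Ideal.Quotient.mk I f := by
  induction f using MvPolynomial.induction_on with
  | C r =>
    rw [← algebraMap_eq, mkExcept_of_mem_supported (Subalgebra.algebraMap_mem _ r),
      Polynomial.eval_C]
  | add f g hf hg => rw [map_add, Polynomial.eval_add, hf, hg, map_add]
  | mul_X f t hf =>
    rw [map_mul, Polynomial.eval_mul, hf, map_mul]
    by_cases h : t = s
    · rw [h, mkExcept_X_self, Polynomial.eval_X]
    · rw [mkExcept_of_mem_supported (X_mem_supported_compl h), Polynomial.eval_C]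

lemma isSMulRegular_quotient_mul_X_add {G : Set (MvPolynomial σ R)} {a b : MvPolynomial σ R}
    (hG : ∀ g ∈ G, g ∈ supported R {s}ᶜ) (ha : a ∈ supported R {s}ᶜ)
    (hb : b ∈ supported R {s}ᶜ) (hreg : IsSMulRegular (MvPolynomial σ R ⧸ Ideal.span G) a) :
    IsSMulRegular (MvPolynomial σ R ⧸ Ideal.span G) (a * X s + b) := by
  rw [isSMulRegular_quotient_iff_forall_mul_mem]
  intro f hf
  have hker : Ideal.span G ≤ RingHom.ker (mkExcept s (Ideal.span G)) := by
    refine Ideal.span_le.mpr fun g hg ↦ ?_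
    rw [SetLike.mem_coe, RingHom.mem_ker, mkExcept_of_mem_supported (hG g hg),
      Ideal.Quotient.eq_zero_iff_mem.mpr (Ideal.subset_span hg), map_zero]
  have hzero : mkExcept s (Ideal.span G) f = 0 := by
    have hlin := isSMulRegular_C_mul_X_add_C (b := Ideal.Quotient.mk _ b)
      ((isSMulRegular_algebraMap_iff (A := MvPolynomial σ R ⧸ Ideal.span G)).mpr hreg)
    refine hlin.right_eq_zero_of_smul ?_
    simpa [mkExcept_of_mem_supported ha, mkExcept_of_mem_supported hb, mkExcept_X_self]
      using hker hf
  rw [← Ideal.Quotient.eq_zero_iff_mem, ← eval_mkExcept (s := s), hzero, Polynomial.eval_zero]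

end VariableElimination

section GenericEntries

open MvPolynomial

/-- Entries of the generic alternating matrix, numbered from the last row and column, so that the
Pfaffian of a leading block is expanded along its most recently added row; zero out of range. -/
noncomputable def revPhi (n i j : ℕ) : HURing n :=
  if h : i < 2 * n ∧ j < 2 * n then
    huPhi n ⟨2 * n - 1 - i, by omega⟩ ⟨2 * n - 1 - j, by omega⟩ else 0

/-- Entries of the generic vector, numbered from the last one to match `revPhi`; zero out of
range. -/
noncomputable def revV (n j : ℕ) : HURing n :=
  if h : j < 2 * n then huV n ⟨2 * n - 1 - j, by omega⟩ else 0

/-- The variable `x_{ij}` in the reversed numbering, the one equal to `revPhi n i j`. -/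
def entryVar (n i j : ℕ) (hj : j < i) (hi : i < 2 * n) :
    {p : Fin (2 * n) × Fin (2 * n) // p.1 < p.2} ⊕ Fin (2 * n) :=
  Sum.inl ⟨(⟨2 * n - 1 - i, by omega⟩, ⟨2 * n - 1 - j, by omega⟩), by
    simp only [Fin.lt_def]; omega⟩

/-- The variable `y_j` in the reversed numbering, the one equal to `revV n j`. -/
def coordVar (n j : ℕ) (hj : j < 2 * n) :
    {p : Fin (2 * n) × Fin (2 * n) // p.1 < p.2} ⊕ Fin (2 * n) :=
  Sum.inr ⟨2 * n - 1 - j, by omega⟩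

variable {n : ℕ}

lemma revPhi_eq_X {i j : ℕ} (hj : j < i) (hi : i < 2 * n) :
    revPhi n i j = X (entryVar n i j hj hi) := by
  have h : (⟨2 * n - 1 - i, by omega⟩ : Fin (2 * n)) < ⟨2 * n - 1 - j, by omega⟩ := by
    simp only [Fin.lt_def]; omega
  rw [revPhi, dif_pos ⟨hi, by omega⟩, huPhi, Matrix.of_apply, dif_pos h]
  rfl

lemma revV_eq_X {j : ℕ} (hj : j < 2 * n) :
    revV n j = X (coordVar n j hj) := by
  rw [revV, dif_pos hj]; rfl

lemma huPhi_antisymm (i j : Fin (2 * n)) : huPhi n i j = -huPhi n j i := by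
  simp only [huPhi, Matrix.of_apply]
  rcases lt_trichotomy i j with h | rfl | h
  · simp [h, h.not_gt]
  · simp
  · simp [h, h.not_gt]

lemma revPhi_antisymm (i j : ℕ) : revPhi n i j = -revPhi n j i := by
  unfold revPhi
  by_cases h : i < 2 * n ∧ j < 2 * n
  · rw [dif_pos h, dif_pos h.symm, huPhi_antisymm]
  · rw [dif_neg h, dif_neg fun h' ↦ h h'.symm, neg_zero]

lemma revPhi_self (i : ℕ) : revPhi n i i = 0 := self_eq_neg.mp (revPhi_antisymm i i)

lemma revPhi_mem_of_ne (s) (i j : ℕ)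
    (h : ∀ i' j' hj hi, (i' = i ∧ j' = j) ∨ (i' = j ∧ j' = i) → entryVar n i' j' hj hi ≠ s) :
    revPhi n i j ∈ supported ℤ {s}ᶜ := by
  rcases lt_trichotomy i j with hij | rfl | hij
  · by_cases hj : j < 2 * n
    · rw [revPhi_antisymm, revPhi_eq_X hij hj]
      exact neg_mem (X_mem_supported_compl (h j i hij hj (by simp)))
    · rw [revPhi, dif_neg (by omega)]; exact zero_mem _
  · rw [revPhi_self]; exact zero_mem _
  · by_cases hi : i < 2 * n
    · rw [revPhi_eq_X hij hi]
      exact X_mem_supported_compl (h i j hij hi (by simp))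
    · rw [revPhi, dif_neg (by omega)]; exact zero_mem _

lemma revPhi_mem_coord (i j a : ℕ) (ha : a < 2 * n) :
    revPhi n i j ∈ supported ℤ {coordVar n a ha}ᶜ :=
  revPhi_mem_of_ne _ _ _ fun _ _ _ _ _ ↦ by simp [entryVar, coordVar]

lemma revPhi_mem_entry (i j a b : ℕ) (hb : b < a) (ha : a < 2 * n)
    (h : i = a → j ≠ b) (h' : i = b → j ≠ a) :
    revPhi n i j ∈ supported ℤ {entryVar n a b hb ha}ᶜ :=
  revPhi_mem_of_ne _ _ _ fun i' j' hj hi hij ↦ by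
    simp only [entryVar, ne_eq, Sum.inl.injEq, Subtype.mk.injEq, Prod.mk.injEq, Fin.mk.injEq]
    omega

lemma revV_mem_coord (i a : ℕ) (ha : a < 2 * n) (h : i ≠ a) :
    revV n i ∈ supported ℤ {coordVar n a ha}ᶜ := by
  by_cases hi : i < 2 * n
  · rw [revV_eq_X hi]
    refine X_mem_supported_compl ?_
    simp only [coordVar, ne_eq, Sum.inr.injEq, Fin.mk.injEq]
    omega
  · rw [revV, dif_neg hi]; exact zero_mem _

lemma revV_mem_entry (i a b : ℕ) (hb : b < a) (ha : a < 2 * n) :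
    revV n i ∈ supported ℤ {entryVar n a b hb ha}ᶜ := by
  by_cases hi : i < 2 * n
  · rw [revV_eq_X hi]
    exact X_mem_supported_compl (by simp [coordVar, entryVar])
  · rw [revV, dif_neg hi]; exact zero_mem _

/-- The `i`-th entry of the product of the leading `p` columns of `Φ` with the vector, in the
reversed numbering; for `p = 2 * n` it is an entry of `Φ v`. -/
noncomputable def rowForm (n p i : ℕ) : HURing n :=
  ∑ j ∈ Finset.range p, revPhi n i j * revV n j

/-- The Pfaffian of the leading block of size `p` in the reversed numbering; it vanishes for odd
`p`. -/
noncomputable def blockPf (n p : ℕ) : HURing n := listPfaffian (revPhi n) (List.range p).reverse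

/-- The ideal generated by the vector entries with index at least `p`, modulo which only the leading
`p` columns of `Φ` contribute to `Φ v`. -/
noncomputable def coordIdeal (n p : ℕ) : Ideal (HURing n) :=
  Ideal.span (revV n '' Set.Ici p)

/-- The ideal generated by the vector entries with index at least `p` and the first `q` entries of
`Φ v`. For `q < p` it is a complete intersection, and `blockIdeal` is linked to it. -/
noncomputable def rowIdeal (n p q : ℕ) : Ideal (HURing n) :=
  coordIdeal n p ⊔ Ideal.span (rowForm n (2 * n) '' Set.Iio q)

/-- The Huneke–Ulrich ideal of the leading block of size `p`, together with the vector entries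
outside that block. It interpolates between the unit ideal and `huIdeal n`. -/
noncomputable def blockIdeal (n p : ℕ) : Ideal (HURing n) :=
  rowIdeal n p p ⊔ Ideal.span {blockPf n p}

lemma revV_mem_coordIdeal {p j : ℕ} (h : p ≤ j) : revV n j ∈ coordIdeal n p :=
  Ideal.subset_span ⟨j, h, rfl⟩

lemma coordIdeal_le_rowIdeal (p q : ℕ) : coordIdeal n p ≤ rowIdeal n p q := le_sup_left

lemma rowIdeal_le_blockIdeal (p : ℕ) : rowIdeal n p p ≤ blockIdeal n p := le_sup_left

lemma coordIdeal_anti {p q : ℕ} (h : p ≤ q) : coordIdeal n q ≤ coordIdeal n p :=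
  Ideal.span_mono (Set.image_mono (Set.Ici_subset_Ici.mpr h))

lemma rowIdeal_mono {p p' q q' : ℕ} (h : p' ≤ p) (h' : q ≤ q') :
    rowIdeal n p q ≤ rowIdeal n p' q' :=
  sup_le_sup (coordIdeal_anti h) (Ideal.span_mono (Set.image_mono (Set.Iio_subset_Iio h')))

lemma revV_mem_rowIdeal {p q j : ℕ} (h : p ≤ j) : revV n j ∈ rowIdeal n p q :=
  coordIdeal_le_rowIdeal p q (revV_mem_coordIdeal h)

lemma rowForm_mem_rowIdeal {p q i : ℕ} (h : i < q) : rowForm n (2 * n) i ∈ rowIdeal n p q :=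
  Ideal.mem_sup_right (Ideal.subset_span ⟨i, h, rfl⟩)

lemma blockPf_mem_blockIdeal (p : ℕ) : blockPf n p ∈ blockIdeal n p :=
  Ideal.mem_sup_right (Ideal.mem_span_singleton_self _)

lemma coordIdeal_eq_sup (p : ℕ) :
    coordIdeal n p = coordIdeal n (p + 1) ⊔ Ideal.span {revV n p} := by
  rw [coordIdeal, coordIdeal, ← Ideal.span_union, ← Set.image_singleton, ← Set.image_union]
  congr 2; ext j; simp; omega

lemma rowIdeal_coord_succ (p q : ℕ) :
    rowIdeal n (p + 1) q ⊔ Ideal.span {revV n p} = rowIdeal n p q := by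
  rw [rowIdeal, rowIdeal, coordIdeal_eq_sup p, sup_right_comm]

lemma rowIdeal_row_succ (p q : ℕ) :
    rowIdeal n p (q + 1) = rowIdeal n p q ⊔ Ideal.span {rowForm n (2 * n) q} := by
  rw [rowIdeal, rowIdeal, sup_assoc, ← Ideal.span_union, ← Set.image_singleton,
    ← Set.image_union]
  congr 3; ext j; grind

lemma rowIdeal_zero (p : ℕ) : rowIdeal n p 0 = coordIdeal n p := by
  simp [rowIdeal]

lemma rowForm_sub_mem {p : ℕ} (hp : p ≤ 2 * n) (i : ℕ) :
    rowForm n (2 * n) i - rowForm n p i ∈ coordIdeal n p := by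
  rw [rowForm, rowForm, ← Finset.sum_range_add_sum_Ico _ hp, add_sub_cancel_left]
  exact sum_mem fun j hj ↦ Ideal.mul_mem_left _ _
    (revV_mem_coordIdeal (Finset.mem_Ico.mp hj).1)

lemma rowForm_mem_iff {p : ℕ} (hp : p ≤ 2 * n) (i : ℕ) {I : Ideal (HURing n)}
    (hI : coordIdeal n p ≤ I) : rowForm n (2 * n) i ∈ I ↔ rowForm n p i ∈ I := by
  rw [← sub_add_cancel (rowForm n (2 * n) i) (rowForm n p i)]
  exact I.add_mem_iff_right (hI (rowForm_sub_mem hp i))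

lemma rowIdeal_eq_span {p : ℕ} (hp : p ≤ 2 * n) (q : ℕ) :
    rowIdeal n p q = Ideal.span (revV n '' Set.Ici p ∪ rowForm n p '' Set.Iio q) := by
  apply le_antisymm
  · rw [rowIdeal, coordIdeal, ← Ideal.span_union, Ideal.span_le]
    rintro _ (h | ⟨i, hi, rfl⟩)
    · exact Ideal.subset_span (Or.inl h)
    · rw [SetLike.mem_coe, rowForm_mem_iff hp _ (Ideal.span_mono Set.subset_union_left)]
      exact Ideal.subset_span (Or.inr ⟨i, hi, rfl⟩)
  · rw [Ideal.span_le]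
    rintro _ (⟨j, hj, rfl⟩ | ⟨i, hi, rfl⟩)
    · exact revV_mem_rowIdeal hj
    · rw [SetLike.mem_coe, ← rowForm_mem_iff hp _ (coordIdeal_le_rowIdeal p q)]
      exact rowForm_mem_rowIdeal hi

lemma blockIdeal_eq_span {p : ℕ} (hp : p ≤ 2 * n) :
    blockIdeal n p = Ideal.span
      ((revV n '' Set.Ici p ∪ rowForm n p '' Set.Iio p) ∪ {blockPf n p}) := by
  rw [blockIdeal, rowIdeal_eq_span hp, Ideal.span_union _ {_}]

lemma rowForm_mem_entry (p i a b : ℕ) (hb : b < a) (ha : a < 2 * n)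
    (h : i = a → p ≤ b) (h' : i = b → p ≤ a) :
    rowForm n p i ∈ supported ℤ {entryVar n a b hb ha}ᶜ :=
  sum_mem fun j hj ↦ mul_mem
    (revPhi_mem_entry _ _ _ _ _ _ (fun hi ↦ by simp at hj; have := h hi; omega)
      (fun hi ↦ by simp at hj; have := h' hi; omega)) (revV_mem_entry _ _ _ _ _)

lemma listPfaffian_mem_entry (l : List ℕ) (a b : ℕ) (hb : b < a) (ha : a < 2 * n)
    (h : ∀ c ∈ l, c < a) :
    listPfaffian (revPhi n) l ∈ supported ℤ {entryVar n a b hb ha}ᶜ :=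
  listPfaffian_mem_of_entries_mem _ _ fun i hi j hj ↦ revPhi_mem_entry _ _ _ _ _ _
    (fun hia ↦ absurd hia (h i hi).ne) fun _ ↦ (h j hj).ne

lemma reverse_range_succ (p : ℕ) : (List.range (p + 1)).reverse = p :: (List.range p).reverse := by
  simp [List.range_succ]

lemma exists_blockPf_eq_mul_X_add {r : ℕ} (hr : r + 1 < 2 * n) :
    ∃ b ∈ supported ℤ {entryVar n (r + 1) r (by omega) hr}ᶜ,
      blockPf n (r + 2) = blockPf n r * X (entryVar n (r + 1) r (by omega) hr) + b := by
  refine ⟨-laplaceSum (revPhi n (r + 1)) (fun l ↦ listPfaffian (revPhi n) (r :: l))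
    (List.range r).reverse, neg_mem (laplaceSum_mem_subring _ (fun b hb ↦ ?_) fun k _ ↦ ?_), ?_⟩
  · rw [List.mem_reverse, List.mem_range] at hb
    exact revPhi_mem_entry _ _ _ _ _ _ (by omega) (by omega)
  · refine listPfaffian_mem_entry _ _ _ _ _ fun c hc ↦ ?_
    obtain rfl | hc := List.mem_cons.mp hc
    · exact Nat.lt_succ_self c
    · have := List.mem_of_mem_eraseIdx hc
      rw [List.mem_reverse, List.mem_range] at this
      omega
  · rw [blockPf, reverse_range_succ, listPfaffian_cons, reverse_range_succ, laplaceSum_cons,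
      ← revPhi_eq_X, blockPf]
    ring

end GenericEntries

section BlockIdeals

open MvPolynomial

variable {n : ℕ}

lemma sum_revV_mul_listPfaffian_cons (p : ℕ) (l : List ℕ) :
    ∑ a ∈ Finset.range p, revV n a * listPfaffian (revPhi n) (a :: l) =
      -laplaceSum (rowForm n p) (listPfaffian (revPhi n)) l :=
  sum_mul_listPfaffian_cons revPhi_antisymm _ _ _

lemma revV_mul_listPfaffian_cons {p i : ℕ} (hi : i < p) (l : List ℕ)
    (h : ∀ a < p, a ≠ i → a ∈ l) :
    revV n i * listPfaffian (revPhi n) (i :: l) =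
      -laplaceSum (rowForm n p) (listPfaffian (revPhi n)) l := by
  rw [← sum_revV_mul_listPfaffian_cons, Finset.sum_eq_single i]
  · intro a ha hai
    rw [listPfaffian_cons_of_mem revPhi_antisymm (revPhi_self a)
      (h a (Finset.mem_range.mp ha) hai), mul_zero]
  · intro h
    simp [hi] at h

lemma rowForm_self_mem_rowIdeal {p q i : ℕ} (hp : p ≤ 2 * n) (h : i < q) :
    rowForm n p i ∈ rowIdeal n p q :=
  (rowForm_mem_iff hp i (coordIdeal_le_rowIdeal p q)).mp (rowForm_mem_rowIdeal h)

lemma laplaceSum_rowForm_mem_rowIdeal {p q : ℕ} (hp : p ≤ 2 * n) (f : List ℕ → HURing n)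
    {l : List ℕ} (h : ∀ b ∈ l, b < q) : laplaceSum (rowForm n p) f l ∈ rowIdeal n p q :=
  laplaceSum_mem _ _ fun b hb ↦ rowForm_self_mem_rowIdeal hp (h b hb)

lemma laplaceSum_rowForm_reverse_range_mem {p : ℕ} (hp : p ≤ 2 * n) (q : ℕ)
    (f : List ℕ → HURing n) :
    laplaceSum (rowForm n p) f (List.range q).reverse ∈ rowIdeal n p q :=
  laplaceSum_rowForm_mem_rowIdeal hp f fun _ hb ↦ List.mem_range.mp (List.mem_reverse.mp hb)

lemma sum_revV_mul_rowForm :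
    ∑ i ∈ Finset.range (2 * n), revV n i * rowForm n (2 * n) i = 0 := by
  refine self_eq_neg.mp ?_
  simp only [rowForm, Finset.mul_sum]
  conv_lhs => rw [Finset.sum_comm]
  simp only [← Finset.sum_neg_distrib]
  refine Finset.sum_congr rfl fun i _ ↦ Finset.sum_congr rfl fun j _ ↦ ?_
  rw [revPhi_antisymm]
  ring

lemma sum_revV_mul_rowForm_mem_coordIdeal {r : ℕ} (hr : r ≤ 2 * n) :
    ∑ i ∈ Finset.range r, revV n i * rowForm n (2 * n) i ∈ coordIdeal n r := by
  have h := sum_revV_mul_rowForm (n := n)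
  rw [← Finset.sum_range_add_sum_Ico _ hr] at h
  rw [eq_neg_of_add_eq_zero_left h]
  exact neg_mem (sum_mem fun j hj ↦ Ideal.mul_mem_right _ _
    (revV_mem_coordIdeal (Finset.mem_Ico.mp hj).1))

lemma revV_mul_rowForm_mem {p : ℕ} (hp : p < 2 * n) :
    revV n p * rowForm n (2 * n) p ∈ rowIdeal n (p + 1) p := by
  have h := coordIdeal_le_rowIdeal (p + 1) p (sum_revV_mul_rowForm_mem_coordIdeal hp)
  rw [Finset.sum_range_succ] at h
  refine (Ideal.add_mem_iff_right _ (sum_mem fun i hi ↦ ?_)).mp h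
  exact Ideal.mul_mem_left _ _ (rowForm_mem_rowIdeal (Finset.mem_range.mp hi))

lemma revV_mul_rowForm_add_mem {r : ℕ} (hr : r + 2 ≤ 2 * n) :
    revV n r * rowForm n (2 * n) r + revV n (r + 1) * rowForm n (2 * n) (r + 1) ∈
      rowIdeal n (r + 2) r := by
  have h := coordIdeal_le_rowIdeal (r + 2) r (sum_revV_mul_rowForm_mem_coordIdeal hr)
  rw [Finset.sum_range_succ, Finset.sum_range_succ, add_assoc] at h
  refine (Ideal.add_mem_iff_right _ (sum_mem fun i hi ↦ ?_)).mp h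
  exact Ideal.mul_mem_left _ _ (rowForm_mem_rowIdeal (Finset.mem_range.mp hi))

lemma blockPf_zero : blockPf n 0 = 1 := listPfaffian_nil _

lemma blockPf_of_odd {p : ℕ} (h : Odd p) : blockPf n p = 0 :=
  listPfaffian_of_odd _ _ (by simpa using h)

lemma blockIdeal_zero : blockIdeal n 0 = ⊤ :=
  Ideal.eq_top_of_isUnit_mem _ (blockPf_mem_blockIdeal 0) (by simp [blockPf_zero])

lemma blockIdeal_of_odd {p : ℕ} (h : Odd p) : blockIdeal n p = rowIdeal n p p := by
  simp [blockIdeal, blockPf_of_odd h]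

lemma revV_mul_blockPf_succ (p : ℕ) :
    revV n p * blockPf n (p + 1) =
      -laplaceSum (rowForm n (p + 1)) (listPfaffian (revPhi n)) (List.range p).reverse := by
  rw [blockPf, reverse_range_succ]
  refine revV_mul_listPfaffian_cons p.lt_succ_self _ fun a h1 h2 ↦ ?_
  rw [List.mem_reverse, List.mem_range]
  omega

lemma revV_mul_blockPf_succ_mem {p : ℕ} (hp : p < 2 * n) :
    revV n p * blockPf n (p + 1) ∈ rowIdeal n (p + 1) p := by
  rw [revV_mul_blockPf_succ]
  exact neg_mem (laplaceSum_rowForm_reverse_range_mem hp p _)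

lemma revV_mul_blockPf_mem {p : ℕ} (hp : p ≤ 2 * n) (i : ℕ) :
    revV n i * blockPf n p ∈ rowIdeal n p p := by
  by_cases hi : i < p
  · obtain ⟨l₁, l₂, hl⟩ := List.append_of_mem (List.mem_reverse.mpr (List.mem_range.mpr hi))
    have mem_iff (a : ℕ) : a < p ↔ a = i ∨ a ∈ l₁ ++ l₂ := by
      rw [← List.mem_range, ← List.mem_reverse, hl]
      simp only [List.mem_append, List.mem_cons]
      tauto
    rw [blockPf, hl, listPfaffian_append_cons revPhi_antisymm, mul_left_comm,
      revV_mul_listPfaffian_cons hi _ fun a ha hai ↦ ((mem_iff a).mp ha).resolve_left hai]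
    exact Ideal.mul_mem_left _ _ (neg_mem (laplaceSum_rowForm_mem_rowIdeal hp _ fun b hb ↦
      (mem_iff b).mpr (Or.inr hb)))
  · exact Ideal.mul_mem_right _ _ (revV_mem_rowIdeal (not_lt.mp hi))

lemma revV_mul_blockPf_add_two_add_mem {r : ℕ} (hr : r + 2 ≤ 2 * n) :
    revV n (r + 1) * blockPf n (r + 2) + blockPf n r * rowForm n (2 * n) r ∈
      rowIdeal n (r + 2) r := by
  have h1 := laplaceSum_rowForm_reverse_range_mem hr r fun l ↦ listPfaffian (revPhi n) (r :: l)
  have h2 := coordIdeal_le_rowIdeal (r + 2) r (rowForm_sub_mem hr r)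
  rw [revV_mul_blockPf_succ, reverse_range_succ, laplaceSum_cons]
  convert add_mem h1 (Ideal.mul_mem_left _ (blockPf n r) h2) using 1
  rw [blockPf]
  ring

lemma revV_mul_blockPf_add_two_sub_mem {r : ℕ} (hr : r + 2 ≤ 2 * n) :
    revV n r * blockPf n (r + 2) - blockPf n r * rowForm n (2 * n) (r + 1) ∈
      rowIdeal n (r + 2) r := by
  have hswap : blockPf n (r + 2) =
      -listPfaffian (revPhi n) (r :: (r + 1) :: (List.range r).reverse) := by
    rw [blockPf, reverse_range_succ, reverse_range_succ]
    exact listPfaffian_swap revPhi_antisymm _ _ [] _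
  have hexpand := revV_mul_listPfaffian_cons (n := n) (p := r + 2) (by omega)
    ((r + 1) :: (List.range r).reverse) fun a (_ : a < r + 2) (_ : a ≠ r) ↦ by
      simp only [List.mem_cons, List.mem_reverse, List.mem_range]
      omega
  have h1 := laplaceSum_rowForm_reverse_range_mem hr r
    fun l ↦ listPfaffian (revPhi n) ((r + 1) :: l)
  have h2 := coordIdeal_le_rowIdeal (r + 2) r (rowForm_sub_mem hr (r + 1))
  rw [hswap, mul_neg, hexpand, laplaceSum_cons]
  convert neg_mem (add_mem h1 (Ideal.mul_mem_left _ (blockPf n r) h2)) using 1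
  rw [blockPf]
  ring

lemma blockPf_mul_rowForm_mem {p : ℕ} (hp : p < 2 * n) :
    blockPf n p * rowForm n (2 * n) p ∈ rowIdeal n (p + 1) p := by
  have hzero := sum_revV_mul_listPfaffian_cons (n := n) (p + 1) (List.range (p + 1)).reverse
  rw [Finset.sum_eq_zero fun a ha ↦ by
    rw [listPfaffian_cons_of_mem revPhi_antisymm (revPhi_self a)
      (List.mem_reverse.mpr (List.mem_range.mpr (Finset.mem_range.mp ha))), mul_zero],
    reverse_range_succ, laplaceSum_cons] at hzero
  have h1 := laplaceSum_rowForm_reverse_range_mem hp p fun l ↦ listPfaffian (revPhi n) (p :: l)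
  have h2 := coordIdeal_le_rowIdeal (p + 1) p (rowForm_sub_mem hp p)
  convert add_mem h1 (Ideal.mul_mem_left _ (blockPf n p) h2) using 1
  rw [blockPf]
  linear_combination hzero

end BlockIdeals

section Linkage

open MvPolynomial

lemma mul_mem_of_mem_span {U : Set R} {L : Ideal R} {g c : R} (h : ∀ u ∈ U, u * g ∈ L)
    (hc : c ∈ Ideal.span U) : c * g ∈ L := by
  induction hc using Submodule.span_induction with
  | mem u hu => exact h u hu
  | zero => simp
  | add a b _ _ ha hb => rw [add_mul]; exact add_mem ha hb
  | smul r a _ ha => rw [smul_eq_mul, mul_assoc]; exact Ideal.mul_mem_left _ _ ha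

lemma mem_of_mul_mem_sup_span_singleton {K B C : Ideal R} {y g f : R}
    (hK : ∀ f, y * f ∈ K → f ∈ B) (hC : ∀ c, g * c ∈ K ⊔ Ideal.span {y} → c ∈ C)
    (hg : ∀ c ∈ C, c * g ∈ K ⊔ Ideal.span {y} * B) (hf : y * f ∈ K ⊔ Ideal.span {g}) :
    f ∈ B := by
  rw [sup_comm, Ideal.mem_span_singleton_sup] at hf
  obtain ⟨c, k, hk, hyf⟩ := hf
  have hc : c ∈ C := hC c <| by
    rw [sup_comm, Ideal.mem_span_singleton_sup]
    exact ⟨f, -k, neg_mem hk, by linear_combination -hyf⟩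
  obtain ⟨k', hk', z, hz, hcg⟩ := Submodule.mem_sup.mp (hg c hc)
  obtain ⟨b, hb, rfl⟩ := Ideal.mem_span_singleton_mul.mp hz
  rw [← sub_add_cancel f b]
  refine add_mem (hK _ ?_) hb
  rw [show y * (f - b) = k + k' by linear_combination -hyf - hcg]
  exact add_mem hk hk'

variable {n : ℕ}

lemma isSMulRegular_revV_coordIdeal {p : ℕ} (hp : p < 2 * n) :
    IsSMulRegular (HURing n ⧸ coordIdeal n (p + 1)) (revV n p) := by
  have hreg := isSMulRegular_quotient_mul_X_add (R := ℤ) (s := coordVar n p hp)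
    (G := revV n '' Set.Ici (p + 1)) ?_ (one_mem _) (zero_mem _) (.one _)
  · rw [revV_eq_X hp, coordIdeal]
    simpa only [one_mul, add_zero] using hreg
  · rintro _ ⟨j, hj, rfl⟩
    exact revV_mem_coord _ _ _ (Nat.lt_of_succ_le hj).ne'

lemma isSMulRegular_rowForm_of_isSMulRegular_revV {p q : ℕ} (hq : q < p) (hp : p < 2 * n)
    (h : IsSMulRegular (HURing n ⧸ rowIdeal n (p + 1) q) (revV n p)) :
    IsSMulRegular (HURing n ⧸ rowIdeal n (p + 1) q) (rowForm n (2 * n) q) := by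
  have hlinear : rowForm n (p + 1) q = -revV n p * X (entryVar n p q hq hp) + rowForm n p q := by
    rw [rowForm, Finset.sum_range_succ, ← rowForm, ← revPhi_eq_X, revPhi_antisymm q p]
    ring
  refine isSMulRegular_quotient_congr (a := rowForm n (p + 1) q) ?_ ?_
  · rw [← neg_sub]
    exact neg_mem (coordIdeal_le_rowIdeal _ _ (rowForm_sub_mem hp q))
  rw [hlinear]
  rw [rowIdeal_eq_span hp] at h ⊢
  refine isSMulRegular_quotient_mul_X_add ?_ (neg_mem (revV_mem_entry _ _ _ _ _))
    (rowForm_mem_entry _ _ _ _ _ _ (by omega) (by omega)) (isSMulRegular_quotient_neg h)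
  rintro _ (⟨j, -, rfl⟩ | ⟨i, hi, rfl⟩)
  · exact revV_mem_entry _ _ _ _ _
  · rw [Set.mem_Iio] at hi
    exact rowForm_mem_entry _ _ _ _ _ _ (by omega) (by omega)

lemma isSMulRegular_revV_rowIdeal {p q : ℕ} (hq : q ≤ p - 1) (hp : p < 2 * n) :
    IsSMulRegular (HURing n ⧸ rowIdeal n (p + 1) q) (revV n p) := by
  induction q generalizing p with
  | zero =>
    rw [rowIdeal_zero]
    exact isSMulRegular_revV_coordIdeal hp
  | succ q ih =>
    obtain ⟨p, rfl⟩ : ∃ r, p = r + 1 := ⟨p - 1, by omega⟩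
    rw [rowIdeal_row_succ]
    refine isSMulRegular_quotient_sup_span_singleton (ih (by omega) hp) ?_
    rw [rowIdeal_coord_succ]
    exact isSMulRegular_rowForm_of_isSMulRegular_revV (by omega) (by omega)
      (ih (by omega) (by omega))

lemma isSMulRegular_rowForm_rowIdeal {p q : ℕ} (hq : q < p) (hp : p < 2 * n) :
    IsSMulRegular (HURing n ⧸ rowIdeal n (p + 1) q) (rowForm n (2 * n) q) :=
  isSMulRegular_rowForm_of_isSMulRegular_revV hq hp
    (isSMulRegular_revV_rowIdeal (by omega) hp)

lemma isSMulRegular_blockPf {p : ℕ} (he : Even p) (hp : p ≤ 2 * n) :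
    IsSMulRegular (HURing n ⧸ coordIdeal n 0) (blockPf n p) := by
  obtain ⟨r, rfl⟩ := he.two_dvd
  induction r with
  | zero =>
    rw [mul_zero, blockPf_zero]
    exact .one _
  | succ r ih =>
    obtain ⟨b, hb, hexpand⟩ := exists_blockPf_eq_mul_X_add (n := n) (r := 2 * r) (by omega)
    rw [mul_add_one, hexpand]
    refine isSMulRegular_quotient_mul_X_add ?_ ?_ hb (ih (by simp) (by omega))
    · rintro _ ⟨j, -, rfl⟩
      exact revV_mem_entry _ _ _ _ _
    · refine listPfaffian_mem_entry _ _ _ _ _ fun c hc ↦ ?_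
      rw [List.mem_reverse, List.mem_range] at hc
      omega

lemma isSMulRegular_rowForm_blockIdeal_succ {p : ℕ} (hp : p + 1 < 2 * n)
    (h : IsSMulRegular (HURing n ⧸ blockIdeal n (p + 1)) (revV n p)) :
    IsSMulRegular (HURing n ⧸ blockIdeal n (p + 1)) (rowForm n (2 * n) (p + 1)) := by
  have hlinear : rowForm n (p + 1) (p + 1) =
      revV n p * X (entryVar n (p + 1) p (by omega) hp) + rowForm n p (p + 1) := by
    rw [rowForm, Finset.sum_range_succ, ← rowForm, ← revPhi_eq_X]
    ring
  refine isSMulRegular_quotient_congr (a := rowForm n (p + 1) (p + 1)) ?_ ?_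
  · rw [← neg_sub]
    exact neg_mem ((coordIdeal_le_rowIdeal _ _).trans (rowIdeal_le_blockIdeal _)
      (rowForm_sub_mem hp.le (p + 1)))
  rw [hlinear]
  rw [blockIdeal_eq_span hp.le] at h ⊢
  refine isSMulRegular_quotient_mul_X_add ?_ (revV_mem_entry _ _ _ _ _)
    (rowForm_mem_entry _ _ _ _ _ _ (by omega) (by omega)) h
  rintro _ ((⟨j, -, rfl⟩ | ⟨i, hi, rfl⟩) | rfl)
  · exact revV_mem_entry _ _ _ _ _
  · rw [Set.mem_Iio] at hi
    exact rowForm_mem_entry _ _ _ _ _ _ (by omega) (by omega)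
  · exact listPfaffian_mem_entry _ _ _ _ _ fun c hc ↦ List.mem_range.mp (List.mem_reverse.mp hc)

lemma isSMulRegular_rowForm_blockIdeal {p : ℕ} (hp : p < 2 * n)
    (h : ∀ r, r + 1 = p → IsSMulRegular (HURing n ⧸ blockIdeal n (r + 1)) (revV n r)) :
    IsSMulRegular (HURing n ⧸ blockIdeal n p) (rowForm n (2 * n) p) := by
  cases p with
  | zero =>
    rw [isSMulRegular_quotient_iff_forall_mul_mem, blockIdeal_zero]
    exact fun _ _ ↦ trivial
  | succ r => exact isSMulRegular_rowForm_blockIdeal_succ hp (h r rfl)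

lemma mul_mem_of_mem_blockIdeal {p : ℕ} {L : Ideal (HURing n)} {g c : HURing n}
    (h1 : ∀ j, p ≤ j → revV n j * g ∈ L) (h2 : ∀ i < p, rowForm n (2 * n) i * g ∈ L)
    (h3 : blockPf n p * g ∈ L) (hc : c ∈ blockIdeal n p) : c * g ∈ L := by
  rw [blockIdeal, rowIdeal, coordIdeal, ← Ideal.span_union, ← Ideal.span_union] at hc
  refine mul_mem_of_mem_span ?_ hc
  rintro _ ((⟨j, hj, rfl⟩ | ⟨i, hi, rfl⟩) | rfl)
  exacts [h1 j hj, h2 i hi, h3]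

lemma mul_rowForm_mem_of_mem_blockIdeal {r : ℕ} (hr : r + 1 < 2 * n) {c : HURing n}
    (hc : c ∈ blockIdeal n r) :
    c * rowForm n (2 * n) r ∈
      rowIdeal n (r + 2) r ⊔ Ideal.span {revV n (r + 1)} * blockIdeal n (r + 2) := by
  have revV_mul_mem {b : HURing n} (hb : b ∈ blockIdeal n (r + 2)) :
      revV n (r + 1) * b ∈
        rowIdeal n (r + 2) r ⊔ Ideal.span {revV n (r + 1)} * blockIdeal n (r + 2) :=
    Ideal.mem_sup_right (Ideal.mul_mem_mul (Ideal.mem_span_singleton_self _) hb)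
  have rowForm_mem {i : ℕ} (hi : i < r + 2) : rowForm n (2 * n) i ∈ blockIdeal n (r + 2) :=
    rowIdeal_le_blockIdeal _ (rowForm_mem_rowIdeal hi)
  refine mul_mem_of_mem_blockIdeal (fun j hj ↦ ?_) (fun i hi ↦ ?_) ?_ hc
  · obtain rfl | rfl | hj : j = r ∨ j = r + 1 ∨ r + 2 ≤ j := by omega
    · rw [← add_sub_cancel_right (revV n j * _) (revV n (j + 1) * rowForm n (2 * n) (j + 1))]
      exact sub_mem (Ideal.mem_sup_left (revV_mul_rowForm_add_mem hr))
        (revV_mul_mem (rowForm_mem (by omega)))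
    · exact revV_mul_mem (rowForm_mem (by omega))
    · exact Ideal.mem_sup_left (Ideal.mul_mem_right _ _ (revV_mem_rowIdeal hj))
  · exact Ideal.mem_sup_left (Ideal.mul_mem_right _ _ (rowForm_mem_rowIdeal hi))
  · rw [← add_sub_cancel_left (revV n (r + 1) * blockPf n (r + 2)) (blockPf n r * _)]
    exact sub_mem (Ideal.mem_sup_left (revV_mul_blockPf_add_two_add_mem hr))
      (revV_mul_mem (blockPf_mem_blockIdeal _))

lemma mem_blockIdeal_of_revV_mul_mem {p : ℕ} (hp : p < 2 * n)
    (h : ∀ r, r + 1 < p → IsSMulRegular (HURing n ⧸ blockIdeal n (r + 1)) (revV n r))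
    {f : HURing n} (hf : revV n p * f ∈ rowIdeal n (p + 1) p) : f ∈ blockIdeal n (p + 1) := by
  have hY := isSMulRegular_quotient_iff_forall_mul_mem.mp
    (isSMulRegular_revV_rowIdeal (n := n) (q := p - 1) le_rfl hp)
  cases p with
  | zero =>
    exact rowIdeal_le_blockIdeal _ (rowIdeal_mono le_rfl (Nat.zero_le _) (hY f hf))
  | succ r =>
    have hrow := isSMulRegular_quotient_iff_forall_mul_mem.mp <|
      isSMulRegular_rowForm_blockIdeal (p := r) (n := n) (by omega) fun s hs ↦ h s (by omega)
    rw [rowIdeal_row_succ] at hf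
    refine mem_of_mul_mem_sup_span_singleton (C := blockIdeal n r)
      (fun f hf ↦ rowIdeal_le_blockIdeal _ (rowIdeal_mono le_rfl (by omega) (hY f hf)))
      (fun c hc ↦ hrow c (rowIdeal_le_blockIdeal r ?_))
      (fun c ↦ mul_rowForm_mem_of_mem_blockIdeal hp) hf
    rw [rowIdeal_coord_succ] at hc
    exact rowIdeal_mono (by omega) le_rfl hc

lemma mem_blockIdeal_of_revV_mul_mem_rowIdeal_succ {p : ℕ} (hp : p < 2 * n)
    (h : ∀ r < p, IsSMulRegular (HURing n ⧸ blockIdeal n (r + 1)) (revV n r))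
    {f : HURing n} (hf : revV n p * f ∈ rowIdeal n (p + 1) (p + 1)) :
    f ∈ blockIdeal n (p + 1) := by
  have hrow := isSMulRegular_quotient_iff_forall_mul_mem.mp <|
    isSMulRegular_rowForm_blockIdeal (n := n) hp fun s hs ↦ h s (by omega)
  rw [rowIdeal_row_succ] at hf
  refine mem_of_mul_mem_sup_span_singleton (C := blockIdeal n p)
    (fun f ↦ mem_blockIdeal_of_revV_mul_mem hp fun r hr ↦ h r (by omega))
    (fun c hc ↦ hrow c (rowIdeal_le_blockIdeal p (by rwa [rowIdeal_coord_succ] at hc)))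
    (fun c ↦ mul_mem_of_mem_blockIdeal (fun j hj ↦ ?_) (fun i hi ↦ ?_)
      (Ideal.mem_sup_left (blockPf_mul_rowForm_mem hp))) hf
  · obtain rfl | hj := hj.eq_or_lt
    · exact Ideal.mem_sup_right (Ideal.mul_mem_mul (Ideal.mem_span_singleton_self _)
        (rowIdeal_le_blockIdeal _ (rowForm_mem_rowIdeal p.lt_succ_self)))
    · exact Ideal.mem_sup_left (Ideal.mul_mem_right _ _ (revV_mem_rowIdeal hj))
  · exact Ideal.mem_sup_left (Ideal.mul_mem_right _ _ (rowForm_mem_rowIdeal hi))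

lemma rowIdeal_le_coordIdeal_zero (p q : ℕ) : rowIdeal n p q ≤ coordIdeal n 0 := by
  refine sup_le (coordIdeal_anti (Nat.zero_le _)) (Ideal.span_le.mpr ?_)
  rintro _ ⟨i, -, rfl⟩
  exact sum_mem fun j _ ↦ Ideal.mul_mem_left _ _ (revV_mem_coordIdeal (Nat.zero_le _))

lemma mul_blockPf_mem_rowIdeal {p : ℕ} (hp : p ≤ 2 * n) {e : HURing n}
    (he : e ∈ coordIdeal n 0) : e * blockPf n p ∈ rowIdeal n p p := by
  refine mul_mem_of_mem_span ?_ he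
  rintro _ ⟨i, -, rfl⟩
  exact revV_mul_blockPf_mem hp i

lemma mem_coordIdeal_zero_of_revV_mul_eq {r : ℕ} (hr : Even r) (hrn : r + 1 < 2 * n)
    (h : IsSMulRegular (HURing n ⧸ blockIdeal n (r + 1)) (revV n r)) {f k c e : HURing n}
    (hk : k ∈ rowIdeal n (r + 2) (r + 1))
    (hf : revV n (r + 1) * f =
      k + c * rowForm n (2 * n) (r + 1) + e * blockPf n (r + 2)) : e ∈ coordIdeal n 0 := by
  have hrow := isSMulRegular_quotient_iff_forall_mul_mem.mp
    (isSMulRegular_rowForm_blockIdeal_succ hrn h)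
  have hpf := isSMulRegular_quotient_iff_forall_mul_mem.mp
    (isSMulRegular_blockPf (n := n) hr (by omega))
  have hsum : revV n r * c + blockPf n r * e ∈ coordIdeal n 0 := by
    refine rowIdeal_le_coordIdeal_zero (r + 1) (r + 1) ?_
    rw [← blockIdeal_of_odd hr.add_one]
    refine hrow _ (rowIdeal_le_blockIdeal _ ?_)
    have h1 := rowIdeal_mono (n := n) (show r + 1 ≤ r + 2 by omega) (show r ≤ r + 1 by omega)
      (revV_mul_blockPf_add_two_sub_mem hrn)
    have h2 : revV n r * (revV n (r + 1) * f) ∈ rowIdeal n (r + 1) (r + 1) :=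
      Ideal.mul_mem_left _ _ (Ideal.mul_mem_right _ _ (revV_mem_rowIdeal le_rfl))
    have h3 : revV n r * k ∈ rowIdeal n (r + 1) (r + 1) :=
      Ideal.mul_mem_left _ _ (rowIdeal_mono (by omega) le_rfl hk)
    convert sub_mem (sub_mem h2 h3) (Ideal.mul_mem_left _ e h1) using 1
    rw [hf]
    ring
  exact hpf e <| (Ideal.add_mem_iff_right _ (Ideal.mul_mem_right _ _
    (revV_mem_coordIdeal (Nat.zero_le _)))).mp hsum

theorem isSMulRegular_revV_blockIdeal {p : ℕ} (hp : p < 2 * n) :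
    IsSMulRegular (HURing n ⧸ blockIdeal n (p + 1)) (revV n p) := by
  induction p using Nat.strong_induction_on with
  | _ p ih =>
  have ih' : ∀ r < p, IsSMulRegular (HURing n ⧸ blockIdeal n (r + 1)) (revV n r) :=
    fun r hr ↦ ih r hr (by omega)
  rw [isSMulRegular_quotient_iff_forall_mul_mem]
  refine fun f hf ↦ mem_blockIdeal_of_revV_mul_mem_rowIdeal_succ hp ih' ?_
  obtain hpe | ⟨s, rfl⟩ := Nat.even_or_odd p
  · rwa [blockIdeal_of_odd hpe.add_one] at hf
  rw [blockIdeal, sup_comm, Ideal.mem_span_singleton_sup] at hf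
  obtain ⟨e, k, hk, hf⟩ := hf
  have hk' := hk
  rw [rowIdeal_row_succ, sup_comm, Ideal.mem_span_singleton_sup] at hk'
  obtain ⟨c, l, hl, rfl⟩ := hk'
  have he : e ∈ coordIdeal n 0 := mem_coordIdeal_zero_of_revV_mul_eq (c := c) (e := e)
    (even_two_mul s) hp (ih' _ (Nat.lt_succ_self _)) hl (by rw [← hf]; ring)
  rw [← hf]
  exact add_mem (mul_blockPf_mem_rowIdeal hp he) hk

theorem revV_mul_mem_rowIdeal_iff {p : ℕ} (hp : p < 2 * n) {f : HURing n} :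
    revV n p * f ∈ rowIdeal n (p + 1) p ↔ f ∈ blockIdeal n (p + 1) := by
  refine ⟨mem_blockIdeal_of_revV_mul_mem hp
    fun r hr ↦ isSMulRegular_revV_blockIdeal (by omega), fun hf ↦ ?_⟩
  rw [mul_comm (revV n p) f]
  refine mul_mem_of_mem_blockIdeal (fun j hj ↦ Ideal.mul_mem_right _ _ (revV_mem_rowIdeal hj))
    (fun i hi ↦ ?_) ?_ hf
  · obtain hi | rfl := Nat.lt_succ_iff_lt_or_eq.mp hi
    · exact Ideal.mul_mem_right _ _ (rowForm_mem_rowIdeal hi)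
    · rw [mul_comm (rowForm _ _ _)]
      exact revV_mul_rowForm_mem hp
  · rw [mul_comm (blockPf _ _)]
    exact revV_mul_blockPf_succ_mem hp

lemma blockPf_mul_mem_rowIdeal_iff {p : ℕ} (he : Even p) (hp : p ≤ 2 * n) {f : HURing n} :
    blockPf n p * f ∈ rowIdeal n p p ↔ f ∈ coordIdeal n 0 := by
  refine ⟨fun h ↦ ?_, fun h ↦ by rw [mul_comm _ f]; exact mul_blockPf_mem_rowIdeal hp h⟩
  exact isSMulRegular_quotient_iff_forall_mul_mem.mp (isSMulRegular_blockPf he hp) f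
    (rowIdeal_le_coordIdeal_zero _ _ h)

lemma coordIdeal_two_mul : coordIdeal n (2 * n) = ⊥ := by
  rw [coordIdeal, Ideal.span_eq_bot]
  rintro _ ⟨j, hj, rfl⟩
  rw [revV, dif_neg (by simpa using hj)]

lemma blockPf_two_mul : blockPf n (2 * n) = pfaffian (huPhi n) := by
  have hlist : (List.range (2 * n)).reverse =
      List.ofFn fun i : Fin (2 * n) ↦ 2 * n - 1 - (i : ℕ) :=
    List.ext_getElem (by simp) fun i h1 h2 ↦ by simp
  rw [blockPf, hlist, ← pfaffian_eq_listPfaffian]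
  congr 1
  ext1 i j
  rw [Matrix.of_apply, revPhi, dif_pos (by omega)]
  congr 1 <;> ext <;> simp <;> omega

lemma rowForm_two_mul (i : Fin (2 * n)) :
    rowForm n (2 * n) (2 * n - 1 - i) = (huPhi n).mulVec (huV n) i := by
  rw [rowForm, Matrix.mulVec, dotProduct, Finset.sum_range, ← Equiv.sum_comp Fin.revPerm]
  refine Finset.sum_congr rfl fun j _ ↦ ?_
  rw [revPhi, dif_pos (by omega), revV, dif_pos (by omega)]
  congr 2 <;> simp only [Fin.revPerm_apply, Fin.val_rev, Fin.ext_iff] <;> omega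

lemma blockIdeal_two_mul : blockIdeal n (2 * n) = huIdeal n := by
  have hrange : rowForm n (2 * n) '' Set.Iio (2 * n) =
      Set.range ((huPhi n).mulVec (huV n)) := by
    ext f
    constructor
    · rintro ⟨i, hi, rfl⟩
      rw [Set.mem_Iio] at hi
      exact ⟨⟨2 * n - 1 - i, by omega⟩, by rw [← rowForm_two_mul]; congr 1; simp; omega⟩
    · rintro ⟨i, rfl⟩
      exact ⟨2 * n - 1 - i, by simp; omega, rowForm_two_mul i⟩
  rw [blockIdeal, rowIdeal, coordIdeal_two_mul, bot_sup_eq, huIdeal, ← Ideal.span_union,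
    blockPf_two_mul, hrange, huGens, Fin.range_snoc, Set.union_singleton]

end Linkage

section MinimalGenerators

open MvPolynomial

section CoefficientsAtMinimalMonomials

variable {σ : Type*}

lemma coeff_eq_zero_of_mem_ideal_span {S : Set (MvPolynomial σ R)} {m : σ →₀ ℕ}
    (hS : ∀ f ∈ S, ∀ d < m, coeff d f = 0) {f : MvPolynomial σ R} (hf : f ∈ Ideal.span S)
    {d : σ →₀ ℕ} (hd : d < m) : coeff d f = 0 := by
  classical
  induction hf using Submodule.span_induction generalizing d with
  | mem f hf => exact hS f hf d hd
  | zero => simp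
  | add f g _ _ hf hg => rw [coeff_add, hf hd, hg hd, add_zero]
  | smul a f _ hf =>
    rw [smul_eq_mul, coeff_mul]
    refine Finset.sum_eq_zero fun p hp ↦ ?_
    have hle : p.2 ≤ d := by rw [← Finset.HasAntidiagonal.mem_antidiagonal.mp hp]; exact le_add_self
    rw [hf (hle.trans_lt hd), mul_zero]

lemma coeff_mul_eq_coeff_zero_mul {m : σ →₀ ℕ} (a : MvPolynomial σ R) {f : MvPolynomial σ R}
    (hf : ∀ d < m, coeff d f = 0) : coeff m (a * f) = coeff 0 a * coeff m f := by
  classical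
  rw [coeff_mul, Finset.sum_eq_single (0, m) _ (by simp)]
  intro p hp hne
  have hsum : p.1 + p.2 = m := Finset.HasAntidiagonal.mem_antidiagonal.mp hp
  rw [hf p.2, mul_zero]
  refine lt_of_le_of_ne (hsum ▸ le_add_self) fun h ↦ hne (Prod.ext ?_ h)
  rwa [h, add_eq_right] at hsum

variable {κ : Type*} {M : κ → σ →₀ ℕ} {S : Set (MvPolynomial σ R)}

/-- The vector of the coefficients at the monomials `M k`, as a linear map. It sends an ideal whose
elements vanish below every `M k` to the span of the images of its generators. -/
noncomputable def coeffVector (R : Type*) [CommRing R] {σ κ : Type*} (M : κ → σ →₀ ℕ) :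
    MvPolynomial σ R →ₗ[R] κ → R :=
  LinearMap.pi fun k ↦ lcoeff R (M k)

lemma coeffVector_apply (f : MvPolynomial σ R) (k : κ) : coeffVector R M f k = coeff (M k) f :=
  rfl

lemma coeffVector_mem_span_image (hS : ∀ f ∈ S, ∀ k, ∀ d < M k, coeff d f = 0)
    {f : MvPolynomial σ R} (hf : f ∈ Ideal.span S) :
    coeffVector R M f ∈ Submodule.span R (coeffVector R M '' S) := by
  induction hf using Submodule.span_induction with
  | mem f hf => exact Submodule.subset_span ⟨f, hf, rfl⟩
  | zero => simp
  | add f g _ _ hf hg => rw [map_add]; exact add_mem hf hg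
  | smul a f hfS hf =>
    have : coeffVector R M (a • f) = coeff 0 a • coeffVector R M f :=
      funext fun k ↦ coeff_mul_eq_coeff_zero_mul a fun d hd ↦
        coeff_eq_zero_of_mem_ideal_span (fun g hg ↦ hS g hg k) hfS hd
    rw [this]
    exact Submodule.smul_mem _ _ hf

lemma card_le_card_of_coeff_separating [Nontrivial R] [Fintype κ] (gen : κ → MvPolynomial σ R)
    (hlow : ∀ i k, ∀ d < M k, coeff d (gen i) = 0)
    (hunit : ∀ k, IsUnit (coeff (M k) (gen k)))
    (hoff : ∀ i k, i ≠ k → coeff (M k) (gen i) = 0)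
    (s : Finset (MvPolynomial σ R))
    (hs : Ideal.span (s : Set (MvPolynomial σ R)) = Ideal.span (Set.range gen)) :
    Fintype.card κ ≤ s.card := by
  classical
  have hgen (f) (hf : f ∈ Ideal.span (Set.range gen)) (k d) (hd : d < M k) : coeff d f = 0 :=
    coeff_eq_zero_of_mem_ideal_span (by rintro _ ⟨i, rfl⟩; exact hlow i k) hf hd
  have htop : Submodule.span R (s.image (coeffVector R M) : Set (κ → R)) = ⊤ := by
    rw [eq_top_iff, ← (Pi.basisFun R κ).span_eq, Submodule.span_le]
    rintro _ ⟨k, rfl⟩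
    obtain ⟨u, hu⟩ := hunit k
    have hbasis : Pi.basisFun R κ k = (↑u⁻¹ : R) • coeffVector R M (gen k) := by
      ext i
      rw [Pi.smul_apply, coeffVector_apply]
      obtain rfl | h := eq_or_ne k i
      · simp [← hu]
      · simp [hoff k i h, h.symm]
    rw [hbasis, Finset.coe_image]
    refine Submodule.smul_mem _ _ (coeffVector_mem_span_image
      (fun f hf ↦ hgen f (hs ▸ Ideal.subset_span hf)) ?_)
    exact hs ▸ Ideal.subset_span ⟨k, rfl⟩
  have hrank := finrank_span_finset_le_card (R := R) (s.image (coeffVector R M))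
  rw [Set.finrank, htop, finrank_top, Module.finrank_fintype_fun_eq_card] at hrank
  exact hrank.trans Finset.card_image_le

end CoefficientsAtMinimalMonomials

section Homogeneity

variable {ι σ : Type*}

lemma coeff_eq_zero_of_mem_supported {s : σ} {f : MvPolynomial σ R}
    (hf : f ∈ supported R {s}ᶜ) {d : σ →₀ ℕ} (hd : d s ≠ 0) : coeff d f = 0 := by
  by_contra h
  have : s ∈ f.vars := (mem_vars_iff_mem_support s).mpr
    ⟨d, mem_support_iff.mpr h, Finsupp.mem_support_iff.mpr hd⟩
  exact mem_supported.mp hf this rfl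

lemma laplaceSum_isHomogeneous {p q : ℕ} {w : ι → MvPolynomial σ R}
    {f : List ι → MvPolynomial σ R} {l : List ι} (hw : ∀ b, (w b).IsHomogeneous p)
    (hf : ∀ l' : List ι, l'.length + 1 = l.length → (f l').IsHomogeneous q) :
    (laplaceSum w f l).IsHomogeneous (p + q) := by
  induction l generalizing f with
  | nil => rw [laplaceSum_nil]; exact isHomogeneous_zero _ _ _
  | cons b l ih =>
    rw [laplaceSum_cons]
    exact ((hw b).mul (hf l rfl)).sub (ih fun l' hl' ↦ hf _ (by simpa using hl'))

lemma listPfaffian_isHomogeneous {x : ι → ι → MvPolynomial σ R}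
    (hx : ∀ a b, (x a b).IsHomogeneous 1) {r : ℕ} {l : List ι} (hl : l.length = 2 * r) :
    (listPfaffian x l).IsHomogeneous r := by
  induction r generalizing l with
  | zero =>
    obtain rfl := List.length_eq_zero_iff.mp hl
    rw [listPfaffian_nil]
    exact isHomogeneous_one _ _
  | succ r ih =>
    obtain _ | ⟨a, l⟩ := l
    · simp at hl
    · rw [listPfaffian_cons, add_comm r 1]
      refine laplaceSum_isHomogeneous (hx a) fun l' hl' ↦ ih ?_
      rw [List.length_cons] at hl
      omega

end Homogeneity

variable {n : ℕ}

lemma revPhi_isHomogeneous (i j : ℕ) : (revPhi n i j).IsHomogeneous 1 := by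
  obtain h | rfl | h := lt_trichotomy i j
  · by_cases hj : j < 2 * n
    · rw [revPhi_antisymm, revPhi_eq_X h hj]
      exact (isHomogeneous_X _ _).neg
    · rw [revPhi, dif_neg (by omega)]
      exact isHomogeneous_zero _ _ _
  · rw [revPhi_self]
    exact isHomogeneous_zero _ _ _
  · by_cases hi : i < 2 * n
    · rw [revPhi_eq_X h hi]
      exact isHomogeneous_X _ _
    · rw [revPhi, dif_neg (by omega)]
      exact isHomogeneous_zero _ _ _

lemma rowForm_isHomogeneous (i : ℕ) : (rowForm n (2 * n) i).IsHomogeneous 2 := by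
  refine IsHomogeneous.sum _ _ (1 + 1) fun j hj ↦ (revPhi_isHomogeneous i j).mul ?_
  rw [revV_eq_X (Finset.mem_range.mp hj)]
  exact isHomogeneous_X _ _

lemma blockPf_isHomogeneous (r : ℕ) : (blockPf n (2 * r)).IsHomogeneous r :=
  listPfaffian_isHomogeneous revPhi_isHomogeneous (by simp)

lemma blockPf_mem_coord (p j : ℕ) (hj : j < 2 * n) :
    blockPf n p ∈ supported ℤ {coordVar n j hj}ᶜ :=
  listPfaffian_mem_of_entries_mem _ _ fun _ _ _ _ ↦ revPhi_mem_coord _ _ _ _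

/-- The exponent of the monomial `x_{10} x_{32} ⋯ x_{2r-1,2r-2}`, which occurs in the Pfaffian of
the block of size `2r` with coefficient one. -/
noncomputable def diagMonomial (n : ℕ) : (r : ℕ) → r ≤ n →
    ({p : Fin (2 * n) × Fin (2 * n) // p.1 < p.2} ⊕ Fin (2 * n) →₀ ℕ)
  | 0, _ => 0
  | r + 1, h => diagMonomial n r (by omega) +
      Finsupp.single (entryVar n (2 * r + 1) (2 * r) (by omega) (by omega)) 1

lemma degree_diagMonomial (r : ℕ) (h : r ≤ n) : (diagMonomial n r h).degree = r := by
  induction r with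
  | zero => simp [diagMonomial]
  | succ r ih => simp [diagMonomial, ih]

lemma diagMonomial_coordVar (r : ℕ) (h : r ≤ n) (j : ℕ) (hj : j < 2 * n) :
    diagMonomial n r h (coordVar n j hj) = 0 := by
  induction r with
  | zero => simp [diagMonomial]
  | succ r ih => rw [diagMonomial, Finsupp.add_apply, ih]; simp [coordVar, entryVar]

lemma coeff_diagMonomial_blockPf (r : ℕ) (h : r ≤ n) :
    coeff (diagMonomial n r h) (blockPf n (2 * r)) = 1 := by
  induction r with
  | zero => simp [diagMonomial, blockPf_zero]
  | succ r ih =>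
    obtain ⟨b, hb, hPf⟩ := exists_blockPf_eq_mul_X_add (n := n) (r := 2 * r) (by omega)
    rw [diagMonomial, mul_add_one, hPf, coeff_add, coeff_mul_X, ih,
      coeff_eq_zero_of_mem_supported hb (by simp), add_zero]

lemma coeff_rowForm_eq_zero (i : ℕ) {d}
    (hd : ∀ j (hj : j < 2 * n), d (coordVar n j hj) = 0) :
    coeff d (rowForm n (2 * n) i) = 0 := by
  classical
  rw [rowForm, coeff_sum]
  refine Finset.sum_eq_zero fun j hj ↦ ?_
  rw [revV_eq_X (Finset.mem_range.mp hj), coeff_mul_X', if_neg]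
  simpa using hd j (Finset.mem_range.mp hj)

lemma coeff_rowForm (i j : ℕ) (hj : j < 2 * n) (e) :
    coeff (Finsupp.single (Sum.inl e) 1 + Finsupp.single (coordVar n j hj) 1)
      (rowForm n (2 * n) i) = coeff (Finsupp.single (Sum.inl e) 1) (revPhi n i j) := by
  classical
  rw [rowForm, coeff_sum, Finset.sum_eq_single j]
  · rw [revV_eq_X hj, coeff_mul_X]
  · intro k hk hkj
    have hk' := Finset.mem_range.mp hk
    rw [revV_eq_X hk', coeff_mul_X', if_neg]
    simp only [coordVar, Finsupp.mem_support_iff, Finsupp.add_apply, Finsupp.single_apply,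
      Sum.inr.injEq, Fin.mk.injEq, reduceCtorEq, if_false]
    rw [if_neg (by omega)]
    simp
  · intro h
    exact absurd (Finset.mem_range.mpr hj) h

lemma coeff_revPhi {i j a b : ℕ} (hj : j < i) (hi : i < 2 * n) (hb : b < a) (ha : a < 2 * n) :
    coeff (Finsupp.single (entryVar n a b hb ha) 1) (revPhi n i j) =
      if i = a ∧ j = b then 1 else 0 := by
  classical
  rw [revPhi_eq_X hj hi, coeff_X]
  refine if_congr ?_ rfl rfl
  rw [Finsupp.single_left_inj one_ne_zero]
  simp only [entryVar, Sum.inl.injEq, Subtype.mk.injEq, Prod.mk.injEq, Fin.mk.injEq]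
  omega

/-- The exponents used to separate the generators: `x_{i0} y_0` for the `i`-th entry of `Φ v` with
`i ≠ 0`, `x_{10} y_1` for its zeroth entry, and the diagonal monomial for the Pfaffian. -/
noncomputable def testMonomial (n : ℕ) (hn : 2 ≤ n) : Option (Fin (2 * n)) →
    ({p : Fin (2 * n) × Fin (2 * n) // p.1 < p.2} ⊕ Fin (2 * n) →₀ ℕ)
  | none => diagMonomial n n le_rfl
  | some i => if h : (i : ℕ) = 0 then
      Finsupp.single (entryVar n 1 0 (by omega) (by omega)) 1 +
        Finsupp.single (coordVar n 1 (by omega)) 1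
      else Finsupp.single (entryVar n i 0 (by omega) i.2) 1 +
        Finsupp.single (coordVar n 0 (by omega)) 1

/-- The generators of the Huneke–Ulrich ideal in the reversed numbering, the Pfaffian being indexed
by `none`, so that they share their index type with `testMonomial`. -/
noncomputable def revGens (n : ℕ) : Option (Fin (2 * n)) → HURing n
  | none => blockPf n (2 * n)
  | some i => rowForm n (2 * n) i

lemma degree_testMonomial_some (hn : 2 ≤ n) (i : Fin (2 * n)) :
    (testMonomial n hn (some i)).degree = 2 := by
  by_cases h : (i : ℕ) = 0 <;> simp [testMonomial, h]

lemma degree_lt_degree_of_lt {σ : Type*} {d m : σ →₀ ℕ} (h : d < m) : d.degree < m.degree := by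
  obtain ⟨e, rfl⟩ := le_iff_exists_add.mp h.le
  rw [map_add, lt_add_iff_pos_right, Nat.pos_iff_ne_zero, ne_eq, Finsupp.degree_eq_zero_iff]
  rintro rfl
  exact h.ne (add_zero d).symm

lemma coeff_revGens_of_lt (hn : 2 ≤ n) (i k) {d} (hd : d < testMonomial n hn k) :
    coeff d (revGens n i) = 0 := by
  have hdeg := degree_lt_degree_of_lt hd
  obtain _ | i := i
  · refine (blockPf_isHomogeneous n).coeff_eq_zero ?_
    obtain _ | k := k
    · rw [testMonomial, degree_diagMonomial] at hdeg
      exact hdeg.ne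
    · rw [degree_testMonomial_some] at hdeg
      omega
  · obtain _ | k := k
    · refine coeff_rowForm_eq_zero i fun j hj ↦ ?_
      have := hd.le (coordVar n j hj)
      rwa [testMonomial, diagMonomial_coordVar, Nat.le_zero] at this
    · rw [degree_testMonomial_some] at hdeg
      exact (rowForm_isHomogeneous i).coeff_eq_zero hdeg.ne

lemma coeff_testMonomial_some (hn : 2 ≤ n) (i k : Fin (2 * n)) :
    coeff (testMonomial n hn (some k)) (revGens n (some i)) =
      if i = k then (if (k : ℕ) = 0 then -1 else 1) else 0 := by
  have hi := i.2
  simp only [testMonomial, revGens, Fin.ext_iff]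
  by_cases hk : (k : ℕ) = 0
  · have hcoeff : coeff (Finsupp.single (entryVar n 1 0 (by omega) (by omega)) 1)
        (revPhi n i 1) = if (i : ℕ) = 0 then -1 else 0 := by
      obtain h | h | h : (i : ℕ) = 0 ∨ (i : ℕ) = 1 ∨ 1 < (i : ℕ) := by omega
      · rw [revPhi_antisymm, coeff_neg, h, coeff_revPhi (by omega) (by omega)]
        simp
      · simp [h, revPhi_self]
      · rw [coeff_revPhi h hi, if_neg (by omega), if_neg (by omega)]
    rw [dif_pos hk, if_pos hk, hk]
    exact (coeff_rowForm _ _ _ _).trans hcoeff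
  · have hcoeff : coeff (Finsupp.single (entryVar n k 0 (by omega) k.2) 1)
        (revPhi n i 0) = if (i : ℕ) = k then 1 else 0 := by
      obtain h | h := Nat.eq_zero_or_pos (i : ℕ)
      · rw [h, revPhi_self, coeff_zero, if_neg (by omega)]
      · simp [coeff_revPhi h hi]
    rw [dif_neg hk, if_neg hk]
    exact (coeff_rowForm _ _ _ _).trans hcoeff

lemma coeff_testMonomial_of_ne (hn : 2 ≤ n) {i k} (h : i ≠ k) :
    coeff (testMonomial n hn k) (revGens n i) = 0 := by
  obtain _ | i := i <;> obtain _ | k := k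
  · exact absurd rfl h
  · simp only [testMonomial, revGens]
    split_ifs
    · exact coeff_eq_zero_of_mem_supported (blockPf_mem_coord _ 1 (by omega)) (by simp)
    · exact coeff_eq_zero_of_mem_supported (blockPf_mem_coord _ 0 (by omega)) (by simp)
  · exact coeff_rowForm_eq_zero i fun j hj ↦ diagMonomial_coordVar _ _ _ _
  · rw [coeff_testMonomial_some, if_neg fun hik ↦ h (congrArg some hik)]

lemma isUnit_coeff_testMonomial (hn : 2 ≤ n) (k) :
    IsUnit (coeff (testMonomial n hn k) (revGens n k)) := by
  obtain _ | k := k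
  · rw [testMonomial, revGens, coeff_diagMonomial_blockPf]
    exact isUnit_one
  · rw [coeff_testMonomial_some, if_pos rfl]
    split_ifs
    exacts [isUnit_one.neg, isUnit_one]

lemma range_revGens : Set.range (revGens n) =
    rowForm n (2 * n) '' Set.Iio (2 * n) ∪ {blockPf n (2 * n)} := by
  ext f
  constructor
  · rintro ⟨_ | i, rfl⟩
    · exact Or.inr rfl
    · exact Or.inl ⟨i, i.2, rfl⟩
  · rintro (⟨i, hi, rfl⟩ | rfl)
    · exact ⟨some ⟨i, hi⟩, rfl⟩
    · exact ⟨none, rfl⟩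

lemma huIdeal_eq_span_revGens : huIdeal n = Ideal.span (Set.range (revGens n)) := by
  rw [← blockIdeal_two_mul, blockIdeal, rowIdeal, coordIdeal_two_mul, bot_sup_eq,
    ← Ideal.span_union, range_revGens]

theorem two_mul_add_one_le_card (hn : 2 ≤ n) (s : Finset (HURing n))
    (hs : Ideal.span (s : Set (HURing n)) = huIdeal n) : 2 * n + 1 ≤ s.card := by
  simpa using card_le_card_of_coeff_separating (revGens n)
    (fun i k _ ↦ coeff_revGens_of_lt hn i k) (isUnit_coeff_testMonomial hn)
    (fun _ _ ↦ coeff_testMonomial_of_ne hn) s (hs.trans huIdeal_eq_span_revGens)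

end MinimalGenerators

section RegularlyGeneratedIdeals

open RingTheory.Sequence

/-- The ideal `I` is generated by a weakly regular sequence of length `r`; the unit ideal is
allowed, so that the property passes to `I ⊔ Ideal.span {a}` without further conditions. -/
def IsRegularlyGenerated (I : Ideal R) (r : ℕ) : Prop :=
  ∃ rs : List R, rs.length = r ∧ Ideal.ofList rs = I ∧ IsWeaklyRegular R rs

variable {I : Ideal R} {r : ℕ}

lemma isRegularlyGenerated_bot : IsRegularlyGenerated (⊥ : Ideal R) 0 :=
  ⟨[], rfl, Ideal.ofList_nil, .nil R R⟩

lemma IsRegularlyGenerated.sup_span_singleton (h : IsRegularlyGenerated I r) {a : R}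
    (ha : IsSMulRegular (R ⧸ I) a) : IsRegularlyGenerated (I ⊔ Ideal.span {a}) (r + 1) := by
  obtain ⟨rs, rfl, rfl, hrs⟩ := h
  refine ⟨rs ++ [a], by simp, by simp, (isWeaklyRegular_append_iff _ _ _).mpr ⟨hrs, ?_⟩⟩
  rwa [isWeaklyRegular_singleton_iff, smul_eq_mul, Ideal.mul_top]

lemma IsRegularlyGenerated.height_le [IsNoetherianRing R] (h : IsRegularlyGenerated I r)
    {Q : Ideal R} (hQ : Q ∈ I.minimalPrimes) : Q.height ≤ r := by
  classical
  obtain ⟨rs, rfl, rfl, -⟩ := h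
  have hspan : Ideal.ofList rs = Ideal.span (rs.toFinset : Set R) := by simp [Ideal.ofList]
  rw [hspan] at hQ
  exact (Ideal.height_le_card_of_mem_minimalPrimes_span_finset hQ).trans
    (by exact_mod_cast rs.toFinset_card_le)

lemma length_le_height_of_isWeaklyRegular [IsNoetherianRing R] {rs : List R}
    (hrs : IsWeaklyRegular R rs) (Q : Ideal R) [Q.IsPrime] (hmem : ∀ x ∈ rs, x ∈ Q) :
    (rs.length : ℕ∞) ≤ Q.height := by
  let RQ := Localization.AtPrime Q
  let rsQ := rs.map (algebraMap R RQ)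
  have hreg : IsRegular RQ rsQ := hrs.isRegular_of_isLocalization_of_mem RQ Q hmem
  have : Nontrivial (RQ ⧸ Ideal.ofList rsQ) := by
    refine Ideal.Quotient.nontrivial_iff.mpr fun htop ↦ hreg.top_ne_smul ?_
    rw [smul_eq_mul, Ideal.mul_top, htop]
  have hdim := ringKrullDim_add_length_eq_ringKrullDim_of_isRegular _ hreg
  rw [IsLocalization.AtPrime.ringKrullDim_eq_height Q RQ, List.length_map] at hdim
  rw [← WithBot.coe_le_coe, ← hdim]
  exact le_add_of_nonneg_left ringKrullDim_nonneg_of_nontrivial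

end RegularlyGeneratedIdeals

section Grade

open RingTheory.Sequence

variable {n : ℕ}

lemma isRegularlyGenerated_coordIdeal {p : ℕ} (hp : p ≤ 2 * n) :
    IsRegularlyGenerated (coordIdeal n p) (2 * n - p) := by
  induction hp using Nat.decreasingInduction with
  | self => rw [Nat.sub_self, coordIdeal_two_mul]; exact isRegularlyGenerated_bot
  | of_succ p hp ih =>
    rw [coordIdeal_eq_sup, show 2 * n - p = 2 * n - (p + 1) + 1 by omega]
    exact ih.sup_span_singleton (isSMulRegular_revV_coordIdeal hp)

lemma isRegularlyGenerated_rowIdeal {p q : ℕ} (hp : p < 2 * n) (hq : q ≤ p) :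
    IsRegularlyGenerated (rowIdeal n (p + 1) q) (2 * n - (p + 1) + q) := by
  induction q with
  | zero => rw [rowIdeal_zero, add_zero]; exact isRegularlyGenerated_coordIdeal hp
  | succ q ih =>
    rw [rowIdeal_row_succ, ← add_assoc]
    exact (ih (by omega)).sup_span_singleton (isSMulRegular_rowForm_rowIdeal (by omega) hp)

lemma isRegularlyGenerated_rowIdeal_two_mul :
    IsRegularlyGenerated (rowIdeal n (2 * n) (2 * n - 1)) (2 * n - 1) := by
  obtain rfl | hn := Nat.eq_zero_or_pos n
  · rw [rowIdeal_zero, coordIdeal_two_mul]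
    exact isRegularlyGenerated_bot
  · have := isRegularlyGenerated_rowIdeal (n := n) (p := 2 * n - 1) (by omega) le_rfl
    rwa [show 2 * n - 1 + 1 = 2 * n by omega, Nat.sub_self, zero_add] at this

lemma rowIdeal_two_mul_le_huIdeal : rowIdeal n (2 * n) (2 * n - 1) ≤ huIdeal n := by
  rw [← blockIdeal_two_mul]
  exact (rowIdeal_mono le_rfl (Nat.sub_le _ _)).trans (rowIdeal_le_blockIdeal _)

lemma huIdeal_le_ker_constantCoeff (hn : 0 < n) :
    huIdeal n ≤ RingHom.ker (MvPolynomial.constantCoeff (R := ℤ)) := by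
  rw [huIdeal_eq_span_revGens, Ideal.span_le]
  rintro _ ⟨_ | i, rfl⟩
  · exact (blockPf_isHomogeneous n).coeff_eq_zero (by simp; omega)
  · exact (rowForm_isHomogeneous (i : ℕ)).coeff_eq_zero (by simp)

lemma huIdeal_ne_top (hn : 0 < n) : huIdeal n ≠ ⊤ := fun h ↦ by
  have : (1 : HURing n) ∈ RingHom.ker (MvPolynomial.constantCoeff (R := ℤ)) :=
    huIdeal_le_ker_constantCoeff hn (h ▸ Submodule.mem_top)
  simp [RingHom.mem_ker] at this

/-- By linkage the complete intersection `rowIdeal n (2 * n) (2 * n - 1)` coincides with `huIdeal n`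
wherever the last coordinate of the vector is invertible, and that coordinate is a nonzerodivisor
modulo `huIdeal n`. -/
lemma mem_minimalPrimes_rowIdeal (hn : 0 < n) {Q : Ideal (HURing n)}
    (hQ : Q ∈ (huIdeal n).minimalPrimes) :
    Q ∈ (rowIdeal n (2 * n) (2 * n - 1)).minimalPrimes := by
  obtain ⟨p, hp⟩ : ∃ p, p + 1 = 2 * n := ⟨2 * n - 1, by omega⟩
  have hblock : blockIdeal n (p + 1) = huIdeal n := by rw [hp, blockIdeal_two_mul]
  have hv : revV n p ∉ Q := by
    have := isSMulRegular_revV_blockIdeal (n := n) (p := p) (by omega)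
    rw [hblock] at this
    exact this.notMem_of_mem_minimalPrimes (by rwa [Ideal.annihilator_quotient])
  refine ⟨⟨hQ.1.1, rowIdeal_two_mul_le_huIdeal.trans hQ.1.2⟩, ?_⟩
  rintro Q' ⟨hQ', hle⟩ hQ'Q
  refine hQ.2 ⟨hQ', fun f hf ↦ ?_⟩ hQ'Q
  have hlink : revV n p * f ∈ rowIdeal n (p + 1) p :=
    (revV_mul_mem_rowIdeal_iff (by omega)).mpr (hblock ▸ hf)
  have hrow : rowIdeal n (p + 1) p = rowIdeal n (2 * n) (2 * n - 1) :=
    congrArg₂ (rowIdeal n) hp (by omega)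
  exact (hQ'.mem_or_mem (hle (hrow ▸ hlink))).resolve_left fun h ↦ hv (hQ'Q h)

theorem gradeIs_huIdeal (hn : 0 < n) : gradeIs (HURing n) (huIdeal n) (2 * n - 1) := by
  constructor
  · obtain ⟨rs, hlen, hI, hrs⟩ := isRegularlyGenerated_rowIdeal_two_mul (n := n)
    have hle : Ideal.ofList rs ≤ huIdeal n := hI ▸ rowIdeal_two_mul_le_huIdeal
    refine ⟨rs, hlen, fun x hx ↦ hle (Ideal.subset_span hx), hrs, fun h ↦ huIdeal_ne_top hn ?_⟩
    rw [smul_eq_mul, Ideal.mul_top] at h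
    exact top_le_iff.mp (h ▸ hle)
  · rintro ⟨rs, hlen, hmem, hrs⟩
    obtain ⟨Q, hQ⟩ := Ideal.nonempty_minimalPrimes (huIdeal_ne_top hn)
    have := hQ.1.1
    have hupper := isRegularlyGenerated_rowIdeal_two_mul.height_le
      (mem_minimalPrimes_rowIdeal hn hQ)
    have hlower := length_le_height_of_isWeaklyRegular hrs.toIsWeaklyRegular Q
      fun x hx ↦ hQ.1.2 (hmem x hx)
    have := Nat.cast_le.mp (hlower.trans hupper)
    omega

end Grade

section ExtLength

open CategoryTheory Abelian RingTheory.Sequence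

universe u

variable {Λ : Type u} [CommRing Λ]

section ExactLength

variable {A B C D E : Type*} [AddCommGroup A] [Module Λ A] [AddCommGroup B] [Module Λ B]
  [AddCommGroup C] [Module Λ C] [AddCommGroup D] [Module Λ D] [AddCommGroup E] [Module Λ E]

lemma length_eq_ker_add_range (g : B →ₗ[Λ] C) :
    Module.length Λ B = Module.length Λ (LinearMap.ker g) + Module.length Λ (LinearMap.range g) :=
  Module.length_eq_add_of_exact (LinearMap.ker g).subtype g.rangeRestrict
    (Submodule.subtype_injective _) g.surjective_rangeRestrict (by
      intro x; simp [← LinearMap.mem_ker])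

lemma length_le_add_of_exact (f : A →ₗ[Λ] B) (g : B →ₗ[Λ] C)
    (h : ∀ x, g x = 0 → ∃ y, f y = x) :
    Module.length Λ B ≤ Module.length Λ A + Module.length Λ C := by
  rw [length_eq_ker_add_range g]
  refine add_le_add ?_ (Module.length_le_of_injective (LinearMap.range g).subtype
    (Submodule.subtype_injective _))
  refine le_trans (Module.length_le_of_injective
    (Submodule.inclusion (?_ : LinearMap.ker g ≤ LinearMap.range f))
    (Submodule.inclusion_injective _)) (Module.length_le_of_surjective f.rangeRestrict
      f.surjective_rangeRestrict)
  exact fun x hx ↦ h x hx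

lemma length_add_le_of_exact (f : A →ₗ[Λ] B) (g : B →ₗ[Λ] C) (h : C →ₗ[Λ] D)
    (hfg : ∀ x, g x = 0 → ∃ y, f y = x) (hgh : ∀ x, h (g x) = 0)
    (hh : Function.Surjective h) :
    Module.length Λ B + Module.length Λ D ≤ Module.length Λ A + Module.length Λ C := by
  have h1 : Module.length Λ B ≤ Module.length Λ A + Module.length Λ (LinearMap.range g) := by
    refine length_le_add_of_exact f g.rangeRestrict fun x hx ↦ hfg x ?_
    simpa using congrArg Subtype.val hx
  have h2 : Module.length Λ (LinearMap.range g) + Module.length Λ D ≤ Module.length Λ C := by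
    have hD := length_eq_ker_add_range h
    rw [LinearMap.range_eq_top.mpr hh, Module.length_top] at hD
    rw [hD]
    refine add_le_add (Module.length_le_of_injective (Submodule.inclusion
      (?_ : LinearMap.range g ≤ LinearMap.ker h)) (Submodule.inclusion_injective _)) le_rfl
    rintro _ ⟨x, rfl⟩
    exact hgh x
  calc _ ≤ Module.length Λ A + Module.length Λ (LinearMap.range g) + Module.length Λ D := by gcongr
    _ ≤ _ := by rw [add_assoc]; gcongr

end ExactLength

variable (Λ) in
/-- The length of the `Λ`-module `Ext^i(N, M)`, with values in `ℕ∞`. Long exact sequences enter the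
argument only through the inequalities they give between these lengths. -/
noncomputable def extLength (N M : Type u) [AddCommGroup N] [Module Λ N] [AddCommGroup M]
    [Module Λ M] (i : ℕ) : ℕ∞ :=
  Module.length Λ (Ext (ModuleCat.of Λ N) (ModuleCat.of Λ M) i)

variable {A B C X Y : Type u} [AddCommGroup A] [Module Λ A] [AddCommGroup B] [Module Λ B]
  [AddCommGroup C] [Module Λ C] [AddCommGroup X] [Module Λ X] [AddCommGroup Y] [Module Λ Y]

lemma extLength_congr_left_le (e : X ≃ₗ[Λ] Y) (M : Type u) [AddCommGroup M] [Module Λ M]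
    (i : ℕ) : extLength Λ X M i ≤ extLength Λ Y M i := by
  refine Module.length_le_of_surjective ((Ext.mk₀ (ModuleCat.ofHom (e : X →ₗ[Λ] Y))).precompOfLinear
    Λ (ModuleCat.of Λ M) (zero_add i)) fun x ↦
    ⟨(Ext.mk₀ (ModuleCat.ofHom (e.symm : Y →ₗ[Λ] X))).comp x (zero_add i), ?_⟩
  have : ModuleCat.ofHom (e : X →ₗ[Λ] Y) ≫ ModuleCat.ofHom (e.symm : Y →ₗ[Λ] X) =
      𝟙 (ModuleCat.of Λ X) := by
    ext x; simp
  simp [this]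

lemma extLength_congr_left (e : X ≃ₗ[Λ] Y) (M : Type u) [AddCommGroup M] [Module Λ M]
    (i : ℕ) : extLength Λ X M i = extLength Λ Y M i :=
  le_antisymm (extLength_congr_left_le e M i) (extLength_congr_left_le e.symm M i)

lemma extLength_congr_right_le (e : X ≃ₗ[Λ] Y) (N : Type u) [AddCommGroup N] [Module Λ N]
    (i : ℕ) : extLength Λ N X i ≤ extLength Λ N Y i := by
  refine Module.length_le_of_surjective
    ((Ext.mk₀ (ModuleCat.ofHom (e.symm : Y →ₗ[Λ] X))).postcompOfLinear
    Λ (ModuleCat.of Λ N) (add_zero i)) fun x ↦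
    ⟨x.comp (Ext.mk₀ (ModuleCat.ofHom (e : X →ₗ[Λ] Y))) (add_zero i), ?_⟩
  have : ModuleCat.ofHom (e : X →ₗ[Λ] Y) ≫ ModuleCat.ofHom (e.symm : Y →ₗ[Λ] X) =
      𝟙 (ModuleCat.of Λ X) := by
    ext x; simp
  simp [this]

lemma extLength_congr_right (e : X ≃ₗ[Λ] Y) (N : Type u) [AddCommGroup N] [Module Λ N]
    (i : ℕ) : extLength Λ N X i = extLength Λ N Y i :=
  le_antisymm (extLength_congr_right_le e N i) (extLength_congr_right_le e.symm N i)

lemma extLength_zero (N M : Type u) [AddCommGroup N] [Module Λ N] [AddCommGroup M]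
    [Module Λ M] : extLength Λ N M 0 = Module.length Λ (N →ₗ[Λ] M) :=
  LinearEquiv.length_eq (Ext.linearEquiv₀.trans ModuleCat.homLinearEquiv)

lemma extLength_of_subsingleton_left (N M : Type u) [AddCommGroup N] [Module Λ N]
    [AddCommGroup M] [Module Λ M] [Subsingleton N] (i : ℕ) : extLength Λ N M i = 0 := by
  refine Module.length_eq_zero_iff.mpr ⟨fun x y ↦ ?_⟩
  have h : 𝟙 (ModuleCat.of Λ N) = 0 := by ext x; exact Subsingleton.elim (α := N) _ _
  rw [← Ext.mk₀_id_comp x, ← Ext.mk₀_id_comp y, h]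
  simp

lemma extLength_of_subsingleton_right (N M : Type u) [AddCommGroup N] [Module Λ N]
    [AddCommGroup M] [Module Λ M] [Subsingleton M] (i : ℕ) : extLength Λ N M i = 0 := by
  refine Module.length_eq_zero_iff.mpr ⟨fun x y ↦ ?_⟩
  have h : 𝟙 (ModuleCat.of Λ M) = 0 := by ext x; exact Subsingleton.elim (α := M) _ _
  rw [← Ext.comp_mk₀_id x, ← Ext.comp_mk₀_id y, h]
  simp

lemma extLength_succ_of_projective (P M : Type u) [AddCommGroup P] [Module Λ P]
    [AddCommGroup M] [Module Λ M] [Module.Projective Λ P] (i : ℕ) :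
    extLength Λ P M (i + 1) = 0 := by
  have : Projective (ModuleCat.of Λ P) := inferInstance
  exact Module.length_eq_zero_iff.mpr ⟨fun x y ↦ by
    rw [Ext.eq_zero_of_projective x, Ext.eq_zero_of_projective y]⟩

lemma extLength_zero_le_of_injective (f : A →ₗ[Λ] B) (hf : Function.Injective f) (X : Type u)
    [AddCommGroup X] [Module Λ X] : extLength Λ X A 0 ≤ extLength Λ X B 0 := by
  rw [extLength_zero, extLength_zero]
  exact Module.length_le_of_injective (LinearMap.llcomp Λ X A B f)
    fun a b hab ↦ LinearMap.ext fun x ↦ hf (LinearMap.congr_fun hab x)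

section ShortExact

variable (f : A →ₗ[Λ] B) (g : B →ₗ[Λ] C) (hf : Function.Injective f)
  (hg : Function.Surjective g) (hfg : Function.Exact f g)
include hf hg hfg

lemma exists_shortExact : ∃ w : ModuleCat.ofHom f ≫ ModuleCat.ofHom g = 0,
    (ShortComplex.mk (ModuleCat.ofHom f) (ModuleCat.ofHom g) w).ShortExact := by
  refine ⟨by ext x; exact hfg.apply_apply_eq_zero x, ?_⟩
  refine { exact := ?_, mono_f := ?_, epi_g := ?_ }
  · exact ModuleCat.shortComplex_exact _ hfg
  · exact (ModuleCat.mono_iff_injective _).mpr hf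
  · exact (ModuleCat.epi_iff_surjective _).mpr hg

lemma extLength_covariant_mid_le (X : Type u) [AddCommGroup X] [Module Λ X] (i : ℕ) :
    extLength Λ X B i ≤ extLength Λ X A i + extLength Λ X C i := by
  obtain ⟨w, hS⟩ := exists_shortExact f g hf hg hfg
  exact length_le_add_of_exact
    ((Ext.mk₀ (ModuleCat.ofHom f)).postcompOfLinear Λ (ModuleCat.of Λ X) (add_zero i))
    ((Ext.mk₀ (ModuleCat.ofHom g)).postcompOfLinear Λ (ModuleCat.of Λ X) (add_zero i))
    fun x hx ↦ Ext.covariant_sequence_exact₂ (ModuleCat.of Λ X) hS x hx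

lemma extLength_covariant_left_le (X : Type u) [AddCommGroup X] [Module Λ X] (i : ℕ) :
    extLength Λ X A (i + 1) ≤ extLength Λ X C i + extLength Λ X B (i + 1) := by
  obtain ⟨w, hS⟩ := exists_shortExact f g hf hg hfg
  exact length_le_add_of_exact
    (hS.extClass.postcompOfLinear Λ (ModuleCat.of Λ X) rfl)
    ((Ext.mk₀ (ModuleCat.ofHom f)).postcompOfLinear Λ (ModuleCat.of Λ X) (add_zero (i + 1)))
    fun x hx ↦ Ext.covariant_sequence_exact₁ (ModuleCat.of Λ X) hS x hx rfl

lemma extLength_covariant_right_le (X : Type u) [AddCommGroup X] [Module Λ X] (i : ℕ) :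
    extLength Λ X C i ≤ extLength Λ X B i + extLength Λ X A (i + 1) := by
  obtain ⟨w, hS⟩ := exists_shortExact f g hf hg hfg
  exact length_le_add_of_exact
    ((Ext.mk₀ (ModuleCat.ofHom g)).postcompOfLinear Λ (ModuleCat.of Λ X) (add_zero i))
    (hS.extClass.postcompOfLinear Λ (ModuleCat.of Λ X) rfl)
    fun x hx ↦ Ext.covariant_sequence_exact₃ (ModuleCat.of Λ X) hS x rfl hx

lemma extLength_contravariant_mid_le (M : Type u) [AddCommGroup M] [Module Λ M] (i : ℕ) :
    extLength Λ B M i ≤ extLength Λ C M i + extLength Λ A M i := by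
  obtain ⟨w, hS⟩ := exists_shortExact f g hf hg hfg
  exact length_le_add_of_exact
    ((Ext.mk₀ (ModuleCat.ofHom g)).precompOfLinear Λ (ModuleCat.of Λ M) (zero_add i))
    ((Ext.mk₀ (ModuleCat.ofHom f)).precompOfLinear Λ (ModuleCat.of Λ M) (zero_add i))
    fun x hx ↦ Ext.contravariant_sequence_exact₂ hS (ModuleCat.of Λ M) x hx

lemma extLength_contravariant_right_le (M : Type u) [AddCommGroup M] [Module Λ M] (i : ℕ) :
    extLength Λ C M (i + 1) ≤ extLength Λ A M i + extLength Λ B M (i + 1) := by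
  obtain ⟨w, hS⟩ := exists_shortExact f g hf hg hfg
  exact length_le_add_of_exact
    (hS.extClass.precompOfLinear Λ (ModuleCat.of Λ M) (Nat.add_comm 1 i))
    ((Ext.mk₀ (ModuleCat.ofHom g)).precompOfLinear Λ (ModuleCat.of Λ M) (zero_add (i + 1)))
    fun x hx ↦ Ext.contravariant_sequence_exact₃ hS (ModuleCat.of Λ M) x hx (Nat.add_comm 1 i)

lemma extLength_contravariant_mid_add_right_le (M : Type u) [AddCommGroup M] [Module Λ M] (i : ℕ)
    (h0 : extLength Λ B M (i + 1) = 0) :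
    extLength Λ B M i + extLength Λ C M (i + 1) ≤ extLength Λ C M i + extLength Λ A M i := by
  obtain ⟨w, hS⟩ := exists_shortExact f g hf hg hfg
  have := Module.length_eq_zero_iff.mp h0
  refine length_add_le_of_exact
    ((Ext.mk₀ (ModuleCat.ofHom g)).precompOfLinear Λ (ModuleCat.of Λ M) (zero_add i))
    ((Ext.mk₀ (ModuleCat.ofHom f)).precompOfLinear Λ (ModuleCat.of Λ M) (zero_add i))
    (hS.extClass.precompOfLinear Λ (ModuleCat.of Λ M) (Nat.add_comm 1 i))
    (fun x hx ↦ Ext.contravariant_sequence_exact₂ hS (ModuleCat.of Λ M) x hx) (fun x ↦ ?_)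
    (fun x ↦ Ext.contravariant_sequence_exact₃ hS (ModuleCat.of Λ M) x (Subsingleton.elim _ _)
      (Nat.add_comm 1 i))
  exact ShortComplex.ShortExact.extClass_comp_assoc hS x (h := Nat.add_comm 1 i)

end ShortExact

end ExtLength

section ExtRegular

open CategoryTheory Abelian RingTheory.Sequence Pointwise

universe u

variable {Λ : Type u} [CommRing Λ] {M N : Type u} [AddCommGroup M] [Module Λ M]
  [AddCommGroup N] [Module Λ N]

lemma extLength_quotSMulTop_right_le {x : Λ} (hx : IsSMulRegular M x) (i : ℕ) :
    extLength Λ N (QuotSMulTop x M) i ≤ extLength Λ N M i + extLength Λ N M (i + 1) :=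
  extLength_covariant_right_le (LinearMap.lsmul Λ M x) (x • (⊤ : Submodule Λ M)).mkQ hx
    (Submodule.mkQ_surjective _) (LinearMap.exact_lsmul_mkQ_smul_top M x) N i

lemma extLength_quotSMulTop_left_le {x : Λ} (hx : IsSMulRegular N x) (i : ℕ) :
    extLength Λ (QuotSMulTop x N) M (i + 1) ≤ extLength Λ N M i + extLength Λ N M (i + 1) :=
  extLength_contravariant_right_le (LinearMap.lsmul Λ N x) (x • (⊤ : Submodule Λ N)).mkQ hx
    (Submodule.mkQ_surjective _) (LinearMap.exact_lsmul_mkQ_smul_top N x) M i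

lemma extLength_zero_eq_zero_of_isSMulRegular {x : Λ} (hx : IsSMulRegular M x)
    (hN : x ∈ Module.annihilator Λ N) : extLength Λ N M 0 = 0 := by
  rw [extLength_zero, Module.length_eq_zero_iff]
  have hzero : ∀ φ : N →ₗ[Λ] M, φ = 0 := fun φ ↦ LinearMap.ext fun y ↦ hx <| by
    simp [← map_smul, Module.mem_annihilator.mp hN y]
  exact ⟨fun φ ψ ↦ by rw [hzero φ, hzero ψ]⟩

lemma extLength_succ_le_quotSMulTop {x : Λ} (hx : IsSMulRegular M x)
    (hN : x ∈ Module.annihilator Λ N) (i : ℕ) :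
    extLength Λ N M (i + 1) ≤ extLength Λ N (QuotSMulTop x M) i := by
  have hS := IsSMulRegular.smulShortComplex_shortExact (M := ModuleCat.of Λ M) hx
  refine Module.length_le_of_surjective
    (hS.extClass.postcompOfLinear Λ (ModuleCat.of Λ N) rfl) fun y ↦
    Ext.covariant_sequence_exact₁ (ModuleCat.of Λ N) hS y ?_ rfl
  exact congrArg (fun φ ↦ φ.hom y) (Ext.postcomp_smul_id_eq_zero_of_mem_annihilator
    (M := ModuleCat.of Λ M) (N := ModuleCat.of Λ N) hN (i + 1))

lemma extLength_le_quotient_of_isWeaklyRegular {rs : List Λ}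
    (hrs : IsWeaklyRegular M rs) (hN : ∀ x ∈ rs, x ∈ Module.annihilator Λ N) {j : ℕ}
    (h0 : ∀ i < j, extLength Λ N (M ⧸ (Ideal.ofList rs • ⊤ : Submodule Λ M)) i = 0) :
    (∀ i < j + rs.length, extLength Λ N M i = 0) ∧
      extLength Λ N M (j + rs.length) ≤
        extLength Λ N (M ⧸ (Ideal.ofList rs • ⊤ : Submodule Λ M)) j := by
  induction rs generalizing M with
  | nil =>
    have e := Submodule.quotEquivOfEqBot (Ideal.ofList ([] : List Λ) • (⊤ : Submodule Λ M))
      (by simp)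
    simp only [extLength_congr_right e] at h0 ⊢
    exact ⟨h0, le_rfl⟩
  | cons x rs ih =>
    obtain ⟨hx, hrs⟩ := (isWeaklyRegular_cons_iff _ _ _).mp hrs
    have e := Submodule.quotOfListConsSMulTopEquivQuotSMulTopInner M x rs
    simp only [extLength_congr_right e] at h0 ⊢
    obtain ⟨h1, h2⟩ := ih hrs (fun y hy ↦ hN y (List.mem_cons_of_mem _ hy)) h0
    have hxN := hN x List.mem_cons_self
    refine ⟨fun i hi ↦ ?_, (extLength_succ_le_quotSMulTop hx hxN (j + rs.length)).trans h2⟩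
    cases i with
    | zero => exact extLength_zero_eq_zero_of_isSMulRegular hx hxN
    | succ i =>
      refine le_antisymm ((extLength_succ_le_quotSMulTop hx hxN i).trans (h1 i ?_).le) bot_le
      rw [List.length_cons] at hi
      omega

lemma extLength_quotient_le_of_isWeaklyRegular {rs : List Λ}
    (hrs : IsWeaklyRegular M rs) {j : ℕ}
    (h0 : ∀ i < j + rs.length, extLength Λ N M i = 0) :
    (∀ i < j, extLength Λ N (M ⧸ (Ideal.ofList rs • ⊤ : Submodule Λ M)) i = 0) ∧
      extLength Λ N (M ⧸ (Ideal.ofList rs • ⊤ : Submodule Λ M)) j ≤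
        extLength Λ N M (j + rs.length) := by
  induction rs generalizing M with
  | nil =>
    have e := Submodule.quotEquivOfEqBot (Ideal.ofList ([] : List Λ) • (⊤ : Submodule Λ M))
      (by simp)
    simp only [extLength_congr_right e] at h0 ⊢
    exact ⟨h0, le_rfl⟩
  | cons x rs ih =>
    obtain ⟨hx, hrs⟩ := (isWeaklyRegular_cons_iff _ _ _).mp hrs
    have e := Submodule.quotOfListConsSMulTopEquivQuotSMulTopInner M x rs
    simp only [extLength_congr_right e]
    rw [List.length_cons] at h0 ⊢
    obtain ⟨h1, h2⟩ := ih hrs fun i hi ↦ by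
      have := extLength_quotSMulTop_right_le hx (N := N) i
      rwa [h0 i (by omega), h0 (i + 1) (by omega), add_zero, le_zero_iff] at this
    refine ⟨h1, h2.trans ?_⟩
    have := extLength_quotSMulTop_right_le hx (N := N) (j + rs.length)
    rwa [h0 (j + rs.length) (by omega), zero_add] at this

lemma extLength_quotient_left_eq_zero {rs : List Λ}
    (hrs : IsWeaklyRegular N rs) {c : ℕ} (h0 : ∀ j, c < j → extLength Λ N M j = 0) :
    ∀ j, c + rs.length < j →
      extLength Λ (N ⧸ (Ideal.ofList rs • ⊤ : Submodule Λ N)) M j = 0 := by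
  induction rs generalizing N c with
  | nil =>
    have e := Submodule.quotEquivOfEqBot (Ideal.ofList ([] : List Λ) • (⊤ : Submodule Λ N))
      (by simp)
    exact fun j hj ↦ (extLength_congr_left e M j).trans (h0 j hj)
  | cons x rs ih =>
    obtain ⟨hx, hrs⟩ := (isWeaklyRegular_cons_iff _ _ _).mp hrs
    have e := Submodule.quotOfListConsSMulTopEquivQuotSMulTopInner N x rs
    simp only [extLength_congr_left e, List.length_cons]
    refine fun j hj ↦ ih (c := c + 1) hrs (fun i hi ↦ ?_) j (by omega)
    obtain ⟨i, rfl⟩ : ∃ i', i = i' + 1 := ⟨i - 1, by omega⟩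
    have := extLength_quotSMulTop_left_le hx (M := M) i
    rwa [h0 i (by omega), h0 (i + 1) (by omega), add_zero, le_zero_iff] at this

open IsLocalRing in
lemma extLength_le_length_mul_residueField [IsLocalRing Λ] (hN : IsFiniteLength Λ N) (i : ℕ) :
    extLength Λ N M i ≤ Module.length Λ N * extLength Λ (ResidueField Λ) M i := by
  induction hN with
  | of_subsingleton => rw [extLength_of_subsingleton_left]; exact bot_le
  | @of_simple_quotient N' _ _ N'' hs _ ih =>
    refine (extLength_contravariant_mid_le N''.subtype N''.mkQ N''.injective_subtype
      N''.mkQ_surjective (LinearMap.exact_subtype_mkQ N'') M i).trans ?_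
    obtain ⟨I, hI, ⟨e⟩⟩ := isSimpleModule_iff_quot_maximal.mp hs
    obtain rfl := eq_maximalIdeal hI
    have e' : (N' ⧸ N'') ≃ₗ[Λ] ResidueField Λ := e
    rw [extLength_congr_left e', Module.length_eq_add_of_exact N''.subtype N''.mkQ
      N''.injective_subtype N''.mkQ_surjective (LinearMap.exact_subtype_mkQ N''),
      Module.length_eq_one_iff.mpr hs, add_mul, one_mul, add_comm]
    gcongr

end ExtRegular

section ExtComparison

open CategoryTheory Abelian CochainComplex.HomComplex

lemma extMk_zero_eq_zero_iff {C : Type*} [Category* C]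
    [Abelian C] [HasExt C] {X Y : C} (P : ProjectiveResolution X) (f : P.complex.X 0 ⟶ Y) (m : ℕ)
    (hm : 0 + 1 = m) (hf : P.complex.d m 0 ≫ f = 0) : P.extMk f m hm hf = 0 ↔ f = 0 := by
  simp only [← P.extEquivCohomologyClass.apply_eq_iff_eq,
    ProjectiveResolution.extEquivCohomologyClass_extMk,
    ProjectiveResolution.extEquivCohomologyClass_zero, CohomologyClass.mk_eq_zero_iff]
  rw [Cocycle.toSingleMk_mem_coboundaries_iff _ _ _ _ _ 1 (by simp)]
  have hz : Limits.IsZero (P.cochainComplex.X 1) :=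
    P.cochainComplex.isZero_of_isStrictlyLE 0 1 (by simp)
  constructor
  · rintro ⟨g, hg⟩
    rw [hz.eq_of_src g 0, Limits.comp_zero] at hg
    rw [← cancel_epi (P.cochainComplexXIso (-(0 : ℕ)) 0 rfl).hom, ← hg, Limits.comp_zero]
  · rintro rfl
    exact ⟨0, by simp⟩

universe u

variable {Λ : Type u} [CommRing Λ]

/-- The map sending an `n`-cocycle of `Hom(P, Y)` to its class in `Ext^n(X, Y)`, for a projective
resolution `P` of `X`; its kernel consists of the coboundaries, which is how the `Ext` of derived
functors is compared with the `Ext` of the derived category. -/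
noncomputable def linearMapExtMk {X : ModuleCat.{u} Λ} (P : ProjectiveResolution X)
    (Y : ModuleCat.{u} Λ) (n : ℕ) :
    LinearMap.ker ((P.complex.linearYonedaObj Λ Y).sc n).g.hom →ₗ[Λ] Ext X Y n where
  toFun f := P.extMk f.1 ((ComplexShape.up ℕ).next n) (by simp) f.2
  map_add' f g := (P.add_extMk _ _ _ _ _ _).symm
  map_smul' r f := by
    have := P.extMk_comp_mk₀ f.1 ((ComplexShape.up ℕ).next n) (by simp) f.2 (r • 𝟙 Y)
    rw [RingHom.id_apply, Ext.smul_eq_comp_mk₀, this]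
    congr 1

lemma linearMapExtMk_surjective {X : ModuleCat.{u} Λ} (P : ProjectiveResolution X)
    (Y : ModuleCat.{u} Λ) (n : ℕ) : Function.Surjective (linearMapExtMk P Y n) := fun α ↦ by
  obtain ⟨f, hf, h⟩ := P.extMk_surjective α ((ComplexShape.up ℕ).next n) (by simp)
  exact ⟨⟨f, hf⟩, h⟩

lemma ker_linearMapExtMk {X : ModuleCat.{u} Λ} (P : ProjectiveResolution X)
    (Y : ModuleCat.{u} Λ) (n : ℕ) : LinearMap.ker (linearMapExtMk P Y n) =
      LinearMap.range ((P.complex.linearYonedaObj Λ Y).sc n).moduleCatToCycles := by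
  ext f
  rw [LinearMap.mem_ker, LinearMap.mem_range]
  cases n with
  | zero =>
    refine (extMk_zero_eq_zero_iff P f.1 _ (by simp) f.2).trans ⟨fun h ↦ ⟨0, ?_⟩, ?_⟩
    · rw [map_zero]
      exact Subtype.ext h.symm
    · rintro ⟨g, rfl⟩
      have : ((P.complex.linearYonedaObj Λ Y).sc 0).f = 0 :=
        (P.complex.linearYonedaObj Λ Y).shape _ _ (by simp)
      exact congrArg (fun φ ↦ φ.hom g) this
  | succ n =>
    have hp : (ComplexShape.up ℕ).prev (n + 1) + 1 = n + 1 := by simp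
    refine (P.extMk_eq_zero_iff f.1 _ (by simp) f.2 ((ComplexShape.up ℕ).prev (n + 1)) hp).trans
      ⟨fun ⟨g, hg⟩ ↦ ⟨g, Subtype.ext hg⟩, fun ⟨g, hg⟩ ↦ ⟨g, congrArg Subtype.val hg⟩⟩

lemma nonempty_extMod_linearEquiv {Λ : Type} [CommRing Λ] (M N : Type) [AddCommGroup M]
    [Module Λ M] [AddCommGroup N] [Module Λ N] (n : ℕ) :
    Nonempty (ExtMod Λ M N n ≃ₗ[Λ] Ext (ModuleCat.of Λ M) (ModuleCat.of Λ N) n) := by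
  let P := projectiveResolution (ModuleCat.of Λ M)
  let K := P.complex.linearYonedaObj Λ (ModuleCat.of Λ N)
  exact ⟨(P.isoExt n (ModuleCat.of Λ N) ≪≫ (K.sc n).moduleCatHomologyIso).toLinearEquiv ≪≫ₗ
    Submodule.quotEquivOfEq _ _ (ker_linearMapExtMk P _ n).symm ≪≫ₗ
    (linearMapExtMk P _ n).quotKerEquivOfSurjective (linearMapExtMk_surjective P _ n)⟩

end ExtComparison

section GorensteinCriterion

open CategoryTheory Abelian RingTheory.Sequence IsLocalRing

universe u

section ResidueField

variable {Λ : Type*} [CommRing Λ] [IsLocalRing Λ]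

lemma mem_annihilator_residueField {x : Λ} (hx : x ∈ maximalIdeal Λ) :
    x ∈ Module.annihilator Λ (ResidueField Λ) :=
  Module.mem_annihilator.mpr fun y ↦ by
    rw [Algebra.smul_def, ResidueField.algebraMap_eq, (residue_eq_zero_iff x).mpr hx, zero_mul]

variable (Λ) in
lemma length_residueField : Module.length Λ (ResidueField Λ) = 1 :=
  Module.length_eq_one_iff.mpr <| isSimpleModule_iff_quot_maximal.mpr
    ⟨maximalIdeal Λ, maximalIdeal.isMaximal Λ, ⟨LinearEquiv.refl Λ (Λ ⧸ maximalIdeal Λ)⟩⟩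

variable (Λ) in
lemma length_end_residueField_le_one :
    Module.length Λ (ResidueField Λ →ₗ[Λ] ResidueField Λ) ≤ 1 := by
  refine (Module.length_le_of_injective
    (LinearMap.applyₗ (1 : ResidueField Λ) : (ResidueField Λ →ₗ[Λ] ResidueField Λ) →ₗ[Λ] _)
    fun φ ψ h ↦ LinearMap.ext fun y ↦ ?_).trans (length_residueField Λ).le
  obtain ⟨y, rfl⟩ := residue_surjective y
  have hy : residue Λ y = y • (1 : ResidueField Λ) := by
    rw [Algebra.smul_def, mul_one, ResidueField.algebraMap_eq]
  rw [hy, map_smul, map_smul]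
  exact congrArg (y • ·) h

lemma nonempty_linearEquiv_residueField {M : Type*} [AddCommGroup M] [Module Λ M]
    (h : Module.length Λ M = 1) : Nonempty (M ≃ₗ[Λ] ResidueField Λ) := by
  obtain ⟨I, hI, ⟨e⟩⟩ := isSimpleModule_iff_quot_maximal.mp (Module.length_eq_one_iff.mp h)
  obtain rfl := eq_maximalIdeal hI
  exact ⟨e⟩

end ResidueField

lemma length_quotient_le_length_end {Λ : Type*} [CommRing Λ] (I : Ideal Λ) :
    Module.length Λ (Λ ⧸ I) ≤ Module.length Λ ((Λ ⧸ I) →ₗ[Λ] (Λ ⧸ I)) := by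
  have hker : LinearMap.ker (LinearMap.lsmul Λ (Λ ⧸ I)) = I := by
    ext x
    conv_rhs => rw [← Ideal.annihilator_quotient (I := I), Module.mem_annihilator]
    exact LinearMap.ext_iff
  exact Module.length_le_of_injective (I.liftQ (LinearMap.lsmul Λ (Λ ⧸ I)) hker.ge)
    (LinearMap.ker_eq_bot.mp (Submodule.ker_liftQ_eq_bot' _ _ hker.symm))

section WeaklyRegular

variable {Λ : Type u} [CommRing Λ] {rs : List Λ}

lemma extLength_quotient_self_eq_zero (hrs : IsWeaklyRegular Λ rs) {j : ℕ} (hj : rs.length < j) :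
    extLength Λ (Λ ⧸ (Ideal.ofList rs • ⊤ : Submodule Λ Λ)) Λ j = 0 := by
  refine extLength_quotient_left_eq_zero hrs (c := 0) (fun j hj ↦ ?_) j (by omega)
  obtain ⟨j, rfl⟩ := Nat.exists_eq_add_one_of_ne_zero hj.ne'
  exact extLength_succ_of_projective Λ Λ j

lemma length_quotient_le_extLength_self (hrs : IsWeaklyRegular Λ rs)
    (h0 : ∀ i < rs.length, extLength Λ (Λ ⧸ (Ideal.ofList rs • ⊤ : Submodule Λ Λ)) Λ i = 0) :
    Module.length Λ (Λ ⧸ (Ideal.ofList rs • ⊤ : Submodule Λ Λ)) ≤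
      extLength Λ (Λ ⧸ (Ideal.ofList rs • ⊤ : Submodule Λ Λ)) Λ rs.length := by
  have h := (extLength_quotient_le_of_isWeaklyRegular hrs (j := 0) (by simpa using h0)).2
  rw [zero_add, extLength_zero] at h
  exact (length_quotient_le_length_end _).trans h

end WeaklyRegular

section FiniteLength

variable {Λ : Type u} [CommRing Λ] [IsLocalRing Λ] {M N : Type u} [AddCommGroup M] [Module Λ M]
  [AddCommGroup N] [Module Λ N] {π : N →ₗ[Λ] ResidueField Λ}

-- The sequence `Ext^i(k, M) → Ext^i(N, M) → Ext^i(ker π, M) → Ext^{i+1}(k, M) → 0` leaves no room: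
-- the outer terms on the left have total length at most `1 + length (ker π) = length N`.
lemma extLength_residueField_succ_eq_zero (hN : IsFiniteLength Λ N) (hπ : Function.Surjective π)
    {i : ℕ} (hk : extLength Λ (ResidueField Λ) M i ≤ 1)
    (hlen : Module.length Λ N ≤ extLength Λ N M i) (h0 : extLength Λ N M (i + 1) = 0) :
    extLength Λ (ResidueField Λ) M (i + 1) = 0 := by
  let K := LinearMap.ker π
  have hex : Function.Exact K.subtype π := LinearMap.exact_subtype_ker_map π
  have hK : extLength Λ K M i ≤ Module.length Λ K := by
    simpa using (extLength_le_length_mul_residueField (M := M)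
      (hN.of_injective K.injective_subtype) i).trans (mul_le_mul_right hk _)
  have hcount : Module.length Λ N + extLength Λ (ResidueField Λ) M (i + 1) ≤
      Module.length Λ N + 0 := calc
    _ ≤ extLength Λ N M i + extLength Λ (ResidueField Λ) M (i + 1) := by gcongr
    _ ≤ extLength Λ (ResidueField Λ) M i + extLength Λ K M i :=
      extLength_contravariant_mid_add_right_le K.subtype π K.injective_subtype hπ hex M i h0
    _ ≤ 1 + Module.length Λ K := add_le_add hk hK
    _ = Module.length Λ N + 0 := by
      rw [Module.length_eq_add_of_exact K.subtype π K.injective_subtype hπ hex,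
        length_residueField, add_zero, add_comm]
  exact le_zero_iff.mp
    ((ENat.add_le_add_iff_left (Module.length_ne_top_iff.mpr hN)).mp hcount)

lemma extLength_residueField_add_eq_zero (hN : IsFiniteLength Λ N) (hπ : Function.Surjective π)
    {c : ℕ} (h0 : ∀ i, c < i → extLength Λ N M i = 0)
    (hk : extLength Λ (ResidueField Λ) M c = 0) (j : ℕ) :
    extLength Λ (ResidueField Λ) M (c + j) = 0 := by
  let K := LinearMap.ker π
  induction j with
  | zero => exact hk
  | succ j ih =>
    have hK := extLength_le_length_mul_residueField (M := M)
      (hN.of_injective K.injective_subtype) (c + j)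
    have hle := extLength_contravariant_right_le K.subtype π K.injective_subtype hπ
      (LinearMap.exact_subtype_ker_map π) M (c + j)
    rw [ih, mul_zero, le_zero_iff] at hK
    rwa [hK, h0 _ (by omega), add_zero, le_zero_iff] at hle

end FiniteLength

lemma extLength_residueField_self_of_isWeaklyRegular {Λ : Type u} [CommRing Λ] [IsLocalRing Λ]
    {rs : List Λ} (hrs : IsWeaklyRegular Λ rs) (hmem : ∀ x ∈ rs, x ∈ maximalIdeal Λ)
    (hfin : IsFiniteLength Λ (Λ ⧸ (Ideal.ofList rs • ⊤ : Submodule Λ Λ)))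
    (hsoc : extLength Λ (ResidueField Λ) (Λ ⧸ (Ideal.ofList rs • ⊤ : Submodule Λ Λ)) 0 ≤ 1) :
    (∀ i ≠ rs.length, extLength Λ (ResidueField Λ) Λ i = 0) ∧
      extLength Λ (ResidueField Λ) Λ rs.length = 1 := by
  obtain ⟨hlow, htop⟩ := extLength_le_quotient_of_isWeaklyRegular (N := ResidueField Λ) hrs
    (fun x hx ↦ mem_annihilator_residueField (hmem x hx)) (j := 0) (by simp)
  rw [zero_add] at hlow htop
  replace htop := htop.trans hsoc
  have hvanish (i : ℕ) (hi : extLength Λ (ResidueField Λ) Λ i = 0) :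
      extLength Λ (Λ ⧸ (Ideal.ofList rs • ⊤ : Submodule Λ Λ)) Λ i = 0 := by
    simpa [hi] using extLength_le_length_mul_residueField (M := Λ) hfin i
  have hlen := length_quotient_le_extLength_self hrs fun i hi ↦ hvanish i (hlow i hi)
  have hle : (Ideal.ofList rs • ⊤ : Submodule Λ Λ) ≤ maximalIdeal Λ := by
    rw [smul_eq_mul, Ideal.mul_top]
    exact Ideal.span_le.mpr hmem
  have hne : extLength Λ (ResidueField Λ) Λ rs.length ≠ 0 := fun h0 ↦ by
    rw [hvanish _ h0, le_zero_iff, Module.length_eq_zero_iff,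
      Submodule.Quotient.subsingleton_iff] at hlen
    exact (maximalIdeal.isMaximal Λ).ne_top (top_le_iff.mp (hlen ▸ hle))
  have hπ := Submodule.factor_surjective hle
  have hsucc := extLength_residueField_succ_eq_zero hfin hπ htop hlen
    (extLength_quotient_self_eq_zero hrs rs.length.lt_succ_self)
  refine ⟨fun i hi ↦ ?_, le_antisymm htop (Order.one_le_iff_ne_zero.mpr hne)⟩
  rcases lt_or_gt_of_ne hi with h | h
  · exact hlow i h
  · obtain ⟨j, rfl⟩ := Nat.exists_eq_add_of_le (Nat.succ_le_of_lt h)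
    exact extLength_residueField_add_eq_zero hfin hπ
      (fun l hl ↦ extLength_quotient_self_eq_zero hrs (by omega)) hsucc j

lemma isGorensteinLocalRing_of_isWeaklyRegular {Λ : Type} [CommRing Λ] [IsLocalRing Λ]
    {rs : List Λ} (hrs : IsWeaklyRegular Λ rs) (hmem : ∀ x ∈ rs, x ∈ maximalIdeal Λ)
    (hfin : IsFiniteLength Λ (Λ ⧸ (Ideal.ofList rs • ⊤ : Submodule Λ Λ)))
    (hsoc : extLength Λ (ResidueField Λ) (Λ ⧸ (Ideal.ofList rs • ⊤ : Submodule Λ Λ)) 0 ≤ 1) :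
    IsGorensteinLocalRing Λ := by
  obtain ⟨h0, h1⟩ := extLength_residueField_self_of_isWeaklyRegular hrs hmem hfin hsoc
  refine ⟨rs.length, fun i hi ↦ ?_, ?_⟩
  · obtain ⟨e⟩ := nonempty_extMod_linearEquiv (Λ := Λ) (ResidueField Λ) Λ i
    have := Module.length_eq_zero_iff.mp (h0 i hi)
    exact e.injective.subsingleton
  · obtain ⟨e⟩ := nonempty_extMod_linearEquiv (Λ := Λ) (ResidueField Λ) Λ rs.length
    obtain ⟨e'⟩ := nonempty_linearEquiv_residueField h1
    exact ⟨e.trans e'⟩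

end GorensteinCriterion

section RegularLocalRing

open RingTheory.Sequence IsLocalRing

universe u

section CommRing

variable {Λ : Type*} [CommRing Λ] [IsLocalRing Λ]

lemma exists_span_singleton_sup_span_range {t : ℕ} {f : Fin (t + 1) → Λ}
    (hf : Ideal.span (Set.range f) = maximalIdeal Λ) {x : Λ} (hx : x ∈ maximalIdeal Λ)
    (hx2 : x ∉ maximalIdeal Λ ^ 2) :
    ∃ g : Fin t → Λ, Ideal.span {x} ⊔ Ideal.span (Set.range g) = maximalIdeal Λ := by
  have hfm (i) : f i ∈ maximalIdeal Λ := hf ▸ Ideal.subset_span (Set.mem_range_self i)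
  obtain ⟨c, hc⟩ := Ideal.mem_span_range_iff_exists_fun.mp (hf.symm ▸ hx)
  obtain ⟨i, hi⟩ : ∃ i, IsUnit (c i) := by
    by_contra! h
    refine hx2 (hc ▸ sum_mem fun i _ ↦ ?_)
    rw [sq]
    exact Ideal.mul_mem_mul ((mem_maximalIdeal _).mpr (h i)) (hfm i)
  refine ⟨f ∘ i.succAbove, le_antisymm (sup_le ?_ ?_) ?_⟩
  · rwa [Ideal.span_le, Set.singleton_subset_iff]
  · rw [Ideal.span_le]
    rintro _ ⟨j, rfl⟩
    exact hfm _
  · set J := Ideal.span {x} ⊔ Ideal.span (Set.range (f ∘ i.succAbove))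
    have hj (j) : f (i.succAbove j) ∈ J := Ideal.mem_sup_right (Ideal.subset_span ⟨j, rfl⟩)
    have hxJ : x ∈ J := Ideal.mem_sup_left (Ideal.mem_span_singleton_self x)
    rw [← hf, Ideal.span_le]
    rintro _ ⟨k, rfl⟩
    rcases eq_or_ne k i with rfl | hk
    · rw [Fin.sum_univ_succAbove _ k] at hc
      have hck : c k * f k ∈ J := by
        rw [eq_sub_of_add_eq hc]
        exact J.sub_mem hxJ (sum_mem fun j _ ↦ J.mul_mem_left _ (hj j))
      exact (J.unit_mul_mem_iff_mem hi).mp hck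
    · obtain ⟨j, rfl⟩ := Fin.exists_succAbove_eq hk
      exact hj j

lemma span_range_mk_comp_eq_maximalIdeal {ι : Type*} {x : Λ} [IsLocalRing (Λ ⧸ Ideal.span {x})]
    {g : ι → Λ} (hg : Ideal.span {x} ⊔ Ideal.span (Set.range g) = maximalIdeal Λ) :
    Ideal.span (Set.range (Ideal.Quotient.mk (Ideal.span {x}) ∘ g)) =
      maximalIdeal (Λ ⧸ Ideal.span {x}) := by
  rw [← map_maximalIdeal_of_surjective _ Ideal.Quotient.mk_surjective, ← hg, Ideal.map_sup,
    Ideal.map_quotient_self, bot_sup_eq, Ideal.map_span, Set.range_comp]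

lemma exists_isWeaklyRegular_cons {x : Λ} [IsLocalRing (Λ ⧸ Ideal.span {x})]
    (hx : x ∈ maximalIdeal Λ) (hreg : IsSMulRegular Λ x) {rs : List (Λ ⧸ Ideal.span {x})}
    (hrs : Ideal.ofList rs = maximalIdeal (Λ ⧸ Ideal.span {x}))
    (hreg' : IsWeaklyRegular (Λ ⧸ Ideal.span {x}) rs) :
    ∃ ss : List Λ, ss.length = rs.length + 1 ∧ Ideal.ofList ss = maximalIdeal Λ ∧
      IsWeaklyRegular Λ ss := by
  have hπ : Function.Surjective (Ideal.Quotient.mk (Ideal.span {x})) :=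
    Ideal.Quotient.mk_surjective
  obtain ⟨ss, rfl⟩ := List.map_surjective_iff.mpr hπ rs
  refine ⟨x :: ss, by simp, ?_, .cons hreg ?_⟩
  · rw [← Ideal.map_ofList, ← map_maximalIdeal_of_surjective _ hπ] at hrs
    have hcomap := congrArg (Ideal.comap (Ideal.Quotient.mk (Ideal.span {x}))) hrs
    rw [Ideal.comap_map_of_surjective' _ hπ, Ideal.comap_map_of_surjective' _ hπ,
      Ideal.mk_ker] at hcomap
    rwa [Ideal.ofList_cons, sup_comm, hcomap, sup_eq_left, Ideal.span_singleton_le_iff_mem]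
  · have h := (isWeaklyRegular_map_algebraMap_iff (R := Λ) (M := Λ ⧸ Ideal.span {x})
      (Λ ⧸ Ideal.span {x}) ss).mp hreg'
    refine (LinearEquiv.isWeaklyRegular_congr (Submodule.quotEquivOfEq _ _ ?_) ss).mp h
    rw [← Submodule.ideal_span_singleton_smul, smul_eq_mul, Ideal.mul_top]

end CommRing

section Noetherian

variable {Λ : Type*} [CommRing Λ] [IsLocalRing Λ] [IsNoetherianRing Λ]

lemma maximalIdeal_eq_bot_of_le_sq (h : maximalIdeal Λ ≤ maximalIdeal Λ ^ 2) :
    maximalIdeal Λ = ⊥ :=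
  Submodule.eq_bot_of_le_smul_of_le_jacobson_bot _ _ (IsNoetherian.noetherian _)
    (by rwa [smul_eq_mul, ← sq]) (maximalIdeal_le_jacobson _)

lemma exists_mem_maximalIdeal_notMem (h : 0 < ringKrullDim Λ) :
    ∃ x ∈ maximalIdeal Λ, x ∉ maximalIdeal Λ ^ 2 ∧ ∀ p ∈ minimalPrimes Λ, x ∉ p := by
  have hmin : ∀ p ∈ minimalPrimes Λ, ¬ maximalIdeal Λ ≤ p := fun p hp hle ↦ by
    rw [← maximalIdeal_height_eq_ringKrullDim] at h
    have hpm : p = maximalIdeal Λ := le_antisymm (le_maximalIdeal hp.1.1.ne_top) hle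
    rw [hpm, ← Ideal.height_eq_zero_iff] at hp
    rw [hp] at h
    exact h.ne rfl
  have hsq : ¬ maximalIdeal Λ ≤ maximalIdeal Λ ^ 2 := fun hle ↦ by
    obtain ⟨p, hp, -⟩ := Ideal.exists_minimalPrimes_le (I := ⊥) (J := maximalIdeal Λ) bot_le
    exact hmin p hp (maximalIdeal_eq_bot_of_le_sq hle ▸ bot_le)
  have havoid := mt (Ideal.subset_union_prime_finite
    (s := insert (maximalIdeal Λ ^ 2) (minimalPrimes Λ)) (f := id)
    ((minimalPrimes.finite_of_isNoetherianRing Λ).insert _) (maximalIdeal Λ ^ 2)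
    (maximalIdeal Λ ^ 2) (fun p hp hne _ ↦ (Set.mem_of_mem_insert_of_ne hp hne).1.1)
    (I := maximalIdeal Λ)).mp (by
      rintro ⟨p, hp | hp, hle⟩
      · exact hsq (hp ▸ hle)
      · exact hmin p hp hle)
  obtain ⟨x, hx, hx'⟩ := Set.not_subset.mp havoid
  simp only [Set.mem_iUnion, not_exists] at hx'
  exact ⟨x, hx, hx' _ (Set.mem_insert _ _), fun p hp ↦ hx' p (Set.mem_insert_of_mem _ hp)⟩

lemma isDomain_of_isPrime_span_singleton {x : Λ} (hx : (Ideal.span {x}).IsPrime)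
    (hmin : ∀ p ∈ minimalPrimes Λ, x ∉ p) : IsDomain Λ := by
  obtain ⟨p, hp, hle⟩ := Ideal.exists_minimalPrimes_le (I := ⊥) (J := Ideal.span {x}) bot_le
  have hpp : p.IsPrime := hp.1.1
  have hbot : p = ⊥ := by
    refine Submodule.eq_bot_of_le_smul_of_le_jacobson_bot (Ideal.span {x}) p
      (IsNoetherian.noetherian _) (fun y hy ↦ ?_)
      ((le_maximalIdeal hx.ne_top).trans (maximalIdeal_le_jacobson _))
    obtain ⟨z, rfl⟩ := Ideal.mem_span_singleton'.mp (hle hy)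
    rw [smul_eq_mul, mul_comm z]
    exact Ideal.mul_mem_mul (Ideal.mem_span_singleton_self x)
      ((hpp.mem_or_mem hy).resolve_right (hmin p hp))
  subst hbot
  exact IsDomain.of_bot_isPrime Λ

lemma ringKrullDim_le_of_span_range_eq_maximalIdeal {t : ℕ} {f : Fin t → Λ}
    (hf : Ideal.span (Set.range f) = maximalIdeal Λ) : ringKrullDim Λ ≤ t := by
  refine (ringKrullDim_le_spanFinrank_maximalIdeal Λ).trans ?_
  have hspan := Submodule.spanFinrank_span_le_ncard_of_finite (R := Λ) (Set.finite_range f)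
  have hcard : (Set.range f).ncard ≤ t := by
    simpa [Set.ncard_univ, Set.image_univ] using Set.ncard_image_le (f := f) (s := Set.univ)
  rw [← hf]
  exact_mod_cast hspan.trans hcard

lemma le_ringKrullDim_quotient_span_singleton {t : ℕ} (hdim : ringKrullDim Λ = (t + 1 : ℕ))
    {x : Λ} (hx : x ∈ maximalIdeal Λ) : (t : WithBot ℕ∞) ≤ ringKrullDim (Λ ⧸ Ideal.span {x}) := by
  have h := ringKrullDim_le_ringKrullDim_quotient_add_encard (R := Λ) {x}
    (by rw [ringJacobson_eq_maximalIdeal]; simpa using hx)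
  rw [hdim, Set.encard_singleton] at h
  exact ENat.WithBot.add_le_add_one_right_iff.mp (by exact_mod_cast h)

end Noetherian

-- Both assertions are proved in one induction: `Λ` is a domain because `Λ ⧸ (x)` is one for a
-- suitable `x`, and being a domain is what makes `x` regular.
lemma isDomain_and_exists_isWeaklyRegular (t : ℕ) : ∀ (Λ : Type u) [CommRing Λ]
    [IsLocalRing Λ] [IsNoetherianRing Λ], ringKrullDim Λ = t →
    (∃ f : Fin t → Λ, Ideal.span (Set.range f) = maximalIdeal Λ) →
    IsDomain Λ ∧ ∃ rs : List Λ, rs.length = t ∧ Ideal.ofList rs = maximalIdeal Λ ∧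
      IsWeaklyRegular Λ rs := by
  induction t with
  | zero =>
    rintro Λ _ _ _ - ⟨f, hf⟩
    rw [Set.range_eq_empty, Ideal.span_empty] at hf
    exact ⟨(isField_iff_maximalIdeal_eq.mpr hf.symm).isDomain, [], rfl,
      by rw [Ideal.ofList_nil, hf], IsWeaklyRegular.nil _ _⟩
  | succ t ih =>
    rintro Λ _ _ _ hdim ⟨f, hf⟩
    obtain ⟨x, hxm, hx2, hxp⟩ := exists_mem_maximalIdeal_notMem (Λ := Λ) (by
      rw [hdim]; exact_mod_cast t.succ_pos)
    obtain ⟨g, hg⟩ := exists_span_singleton_sup_span_range hf hxm hx2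
    have : Nontrivial (Λ ⧸ Ideal.span {x}) := Ideal.Quotient.nontrivial_iff.mpr fun h ↦
      (maximalIdeal.isMaximal Λ).ne_top (top_le_iff.mp (hg ▸ h ▸ le_sup_left))
    have : IsLocalRing (Λ ⧸ Ideal.span {x}) := .of_surjective' _ Ideal.Quotient.mk_surjective
    have hg' := span_range_mk_comp_eq_maximalIdeal hg
    have hdimQ : ringKrullDim (Λ ⧸ Ideal.span {x}) = t :=
      le_antisymm (ringKrullDim_le_of_span_range_eq_maximalIdeal hg')
        (le_ringKrullDim_quotient_span_singleton hdim hxm)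
    obtain ⟨hdom, rs, rfl, hrs, hreg⟩ := ih _ hdimQ ⟨_, hg'⟩
    have : IsDomain Λ :=
      isDomain_of_isPrime_span_singleton ((Ideal.Quotient.isDomain_iff_prime _).mp hdom) hxp
    exact ⟨this, exists_isWeaklyRegular_cons hxm (.of_ne_zero fun h0 ↦ hx2 (h0 ▸ zero_mem _))
      hrs hreg⟩

section IsRegularLocalRing

variable {Λ : Type u} [CommRing Λ] [IsRegularLocalRing Λ] {t : ℕ}

lemma exists_span_range_eq_maximalIdeal (ht : ringKrullDim Λ = t) :
    ∃ f : Fin t → Λ, Ideal.span (Set.range f) = maximalIdeal Λ := by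
  obtain ⟨s, hs, hspan⟩ := Submodule.FG.exists_span_finset_card_eq_spanFinrank
    (IsNoetherian.noetherian (maximalIdeal Λ))
  have hcard : s.card = t := by
    have h := IsRegularLocalRing.spanFinrank_maximalIdeal (R := Λ)
    rw [ht, ← hs] at h
    exact_mod_cast h
  refine ⟨fun i ↦ (s.equivFinOfCardEq hcard).symm i, ?_⟩
  rwa [Set.range_comp' Subtype.val, EquivLike.range_eq_univ, Set.image_univ, Subtype.range_coe]

lemma extLength_residueField_self_of_isRegularLocalRing (ht : ringKrullDim Λ = t) :
    (∀ i < t, extLength Λ (ResidueField Λ) Λ i = 0) ∧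
      extLength Λ (ResidueField Λ) Λ t ≤ 1 := by
  obtain ⟨-, rs, rfl, hrs, hreg⟩ :=
    isDomain_and_exists_isWeaklyRegular t Λ ht (exists_span_range_eq_maximalIdeal ht)
  obtain ⟨hlow, htop⟩ := extLength_le_quotient_of_isWeaklyRegular (N := ResidueField Λ) hreg
    (fun x hx ↦ mem_annihilator_residueField (hrs ▸ Ideal.subset_span hx)) (j := 0) (by simp)
  rw [zero_add] at hlow htop
  have e : (Λ ⧸ (Ideal.ofList rs • ⊤ : Submodule Λ Λ)) ≃ₗ[Λ] ResidueField Λ :=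
    Submodule.quotEquivOfEq _ (maximalIdeal Λ) (by rw [smul_eq_mul, Ideal.mul_top, hrs])
  rw [extLength_congr_right e, extLength_zero] at htop
  exact ⟨hlow, htop.trans (length_end_residueField_le_one Λ)⟩

end IsRegularLocalRing

end RegularLocalRing

section Descent

open CategoryTheory RingTheory.Sequence IsLocalRing

universe u

lemma exists_isRegular_of_extLength_eq_zero {Λ : Type u} [CommRing Λ] [IsLocalRing Λ]
    [IsNoetherianRing Λ] {M : Type u} [AddCommGroup M] [Module Λ M] [Module.Finite Λ M]
    [Nontrivial M] {d : ℕ} (h0 : ∀ i < d, extLength Λ (ResidueField Λ) M i = 0) :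
    ∃ rs : List Λ, rs.length = d ∧ (∀ x ∈ rs, x ∈ maximalIdeal Λ) ∧ IsRegular M rs := by
  have : Module.Finite Λ (ResidueField Λ) :=
    .of_surjective (Algebra.linearMap Λ (ResidueField Λ)) residue_surjective
  have hsupp : Module.support Λ (ResidueField Λ) = PrimeSpectrum.zeroLocus (maximalIdeal Λ) := by
    rw [Module.support_eq_zeroLocus]
    exact congrArg (fun I : Ideal Λ ↦ PrimeSpectrum.zeroLocus (I : Set Λ))
      (Ideal.annihilator_quotient (I := maximalIdeal Λ))
  exact ModuleCat.exists_isRegular_of_exists_subsingleton_ext (maximalIdeal Λ) d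
    (ModuleCat.of Λ M) (Submodule.top_ne_ideal_smul_of_le_jacobson_annihilator
      (maximalIdeal_le_jacobson _)).symm.lt_top (ModuleCat.of Λ (ResidueField Λ)) hsupp
    fun i hi ↦ Module.length_eq_zero_iff.mp (h0 i hi)

lemma isFiniteLength_quotient_of_ringKrullDim_le {Γ : Type*} [CommRing Γ] [IsLocalRing Γ]
    [IsNoetherianRing Γ] {rs : List Γ} (hrs : IsWeaklyRegular Γ rs)
    (hmem : ∀ x ∈ rs, x ∈ maximalIdeal Γ) (hdim : ringKrullDim Γ ≤ rs.length) :
    IsFiniteLength Γ (Γ ⧸ (Ideal.ofList rs • ⊤ : Submodule Γ Γ)) := by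
  have hdim0 : ringKrullDim (Γ ⧸ Ideal.ofList rs) ≤ 0 := by
    rw [← ringKrullDim_add_length_eq_ringKrullDim_of_isRegular rs
      ((isRegular_iff_isWeaklyRegular_of_subset_maximalIdeal hmem).mpr hrs)] at hdim
    exact ENat.WithBot.add_le_add_natCast_right_iff.mp (by simpa using hdim)
  have : Ring.KrullDimLE 0 (Γ ⧸ Ideal.ofList rs) := Ring.krullDimLE_iff.mpr hdim0
  have hart : IsArtinianRing (Γ ⧸ Ideal.ofList rs) :=
    IsNoetherianRing.isArtinianRing_of_krullDimLE_zero
  rw [← Module.length_ne_top_iff, smul_eq_mul, Ideal.mul_top,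
    Module.length_eq_of_surjective (S := Γ) (R := Γ ⧸ Ideal.ofList rs)
      Ideal.Quotient.mk_surjective, Module.length_ne_top_iff]
  exact (isArtinianRing_iff_isFiniteLength _).mp hart

section Surjective

variable {Λ Γ : Type*} [CommRing Λ] [IsLocalRing Λ] [CommRing Γ] [IsLocalRing Γ] [Algebra Λ Γ]
  (hsurj : Function.Surjective (algebraMap Λ Γ))
include hsurj

lemma exists_linearMap_residueField_surjective :
    ∃ κ : ResidueField Λ →ₗ[Λ] ResidueField Γ, Function.Surjective κ := by
  have : IsLocalHom (algebraMap Λ Γ) := .of_surjective _ hsurj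
  refine ⟨{ ResidueField.map (algebraMap Λ Γ) with
    map_smul' := fun a x ↦ ?_ }, fun y ↦ ?_⟩
  · obtain ⟨x, rfl⟩ := residue_surjective x
    change residue Γ (algebraMap Λ Γ (a * x)) = a • residue Γ (algebraMap Λ Γ x)
    rw [map_mul, map_mul, ← algebraMap_smul Γ a, Algebra.smul_def]
    rfl
  · obtain ⟨y, rfl⟩ := residue_surjective y
    obtain ⟨x, rfl⟩ := hsurj y
    exact ⟨residue Λ x, rfl⟩

lemma length_hom_residueField_le (N : Type*) [AddCommGroup N] [Module Λ N] [Module Γ N]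
    [IsScalarTower Λ Γ N] : Module.length Γ (ResidueField Γ →ₗ[Γ] N) ≤
      Module.length Λ (ResidueField Λ →ₗ[Λ] N) := by
  obtain ⟨κ, hκ⟩ := exists_linearMap_residueField_surjective hsurj
  rw [← Module.length_eq_of_surjective (S := Λ) hsurj]
  refine Module.length_le_of_injective ((LinearMap.lcomp Λ N κ).comp
    (LinearMap.restrictScalarsₗ Λ Γ (ResidueField Γ) N Λ)) fun φ ψ h ↦ LinearMap.ext fun y ↦ ?_
  obtain ⟨x, rfl⟩ := hκ y
  exact LinearMap.congr_fun h x

end Surjective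

lemma isGorensteinLocalRing_of_surjective {Λ Γ : Type} [CommRing Λ] [IsLocalRing Λ]
    [IsNoetherianRing Λ] [CommRing Γ] [IsLocalRing Γ] [Algebra Λ Γ]
    (hsurj : Function.Surjective (algebraMap Λ Γ)) {d : ℕ}
    (hlow : ∀ i < d, extLength Λ (ResidueField Λ) Γ i = 0)
    (htop : extLength Λ (ResidueField Λ) Γ d ≤ 1) (hdim : ringKrullDim Γ ≤ d) :
    IsGorensteinLocalRing Γ := by
  have : IsNoetherianRing Γ := isNoetherianRing_of_surjective _ _ _ hsurj
  have : Module.Finite Λ Γ := .of_surjective (Algebra.linearMap Λ Γ) hsurj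
  obtain ⟨rs, rfl, hmem, hreg⟩ := exists_isRegular_of_extLength_eq_zero hlow
  have hreg' : IsWeaklyRegular Γ (rs.map (algebraMap Λ Γ)) :=
    (isWeaklyRegular_map_algebraMap_iff Γ Γ rs).mpr hreg.toIsWeaklyRegular
  have hmem' : ∀ x ∈ rs.map (algebraMap Λ Γ), x ∈ maximalIdeal Γ := fun x hx ↦ by
    obtain ⟨z, hz, rfl⟩ := List.mem_map.mp hx
    exact map_maximalIdeal_of_surjective _ hsurj ▸ Ideal.mem_map_of_mem _ (hmem z hz)
  have hrestrict : (Ideal.ofList rs • ⊤ : Submodule Λ Γ) =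
      (Ideal.ofList (rs.map (algebraMap Λ Γ)) • ⊤ : Submodule Γ Γ).restrictScalars Λ := by
    rw [← Ideal.map_ofList, Ideal.smul_restrictScalars, Submodule.restrictScalars_top]
  refine isGorensteinLocalRing_of_isWeaklyRegular hreg' hmem'
    (isFiniteLength_quotient_of_ringKrullDim_le hreg' hmem' (by simpa using hdim)) ?_
  have hsoc := (extLength_quotient_le_of_isWeaklyRegular (N := ResidueField Λ)
    hreg.toIsWeaklyRegular (j := 0) (by simpa using hlow)).2
  rw [zero_add, extLength_congr_right ((Submodule.quotEquivOfEq _ _ hrestrict).trans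
    (Submodule.Quotient.restrictScalarsEquiv Λ _)), extLength_zero] at hsoc
  rw [extLength_zero]
  exact (length_hom_residueField_le hsurj _).trans (hsoc.trans htop)

end Descent

section DepthChain

open RingTheory.Sequence IsLocalRing

universe u

lemma exists_exact_of_mul_mem_iff {Λ : Type u} [CommRing Λ] {I I' K : Ideal Λ} {y : Λ}
    (hy : ∀ f, y * f ∈ I ↔ f ∈ I') (hK : I ⊔ Ideal.span {y} = K) :
    ∃ (f : (Λ ⧸ I') →ₗ[Λ] (Λ ⧸ I)) (g : (Λ ⧸ I) →ₗ[Λ] (Λ ⧸ K)), Function.Injective f ∧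
      Function.Surjective g ∧ Function.Exact f g := by
  subst hK
  refine ⟨Submodule.mapQ I' I (LinearMap.mulLeft Λ y) fun x hx ↦ (hy x).mpr hx,
    Submodule.factor le_sup_left, ?_, Submodule.factor_surjective _, fun x ↦ ?_⟩
  · rw [injective_iff_map_eq_zero]
    intro x hx
    obtain ⟨x, rfl⟩ := I'.mkQ_surjective x
    exact (Submodule.Quotient.mk_eq_zero I').mpr
      ((hy x).mp ((Submodule.Quotient.mk_eq_zero I).mp hx))
  · obtain ⟨x, rfl⟩ := I.mkQ_surjective x
    constructor
    · intro hx
      obtain ⟨a, ha, b, hb, rfl⟩ := Submodule.mem_sup.mp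
        ((Submodule.Quotient.mk_eq_zero (I ⊔ Ideal.span {y})).mp hx)
      obtain ⟨c, rfl⟩ := Ideal.mem_span_singleton'.mp hb
      refine ⟨I'.mkQ c, (Submodule.Quotient.eq I).mpr ?_⟩
      have : y * c - (a + c * y) = -a := by ring
      exact this ▸ I.neg_mem ha
    · rintro ⟨c, hc⟩
      obtain ⟨c, rfl⟩ := I'.mkQ_surjective c
      rw [← hc]
      exact (Submodule.Quotient.mk_eq_zero (I ⊔ Ideal.span {y})).mpr
        (Ideal.mem_sup_right (Ideal.mul_mem_right _ _ (Ideal.mem_span_singleton_self y)))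

variable {A : Type*} [CommRing A] {Λ : Type u} [CommRing Λ] [Algebra A Λ]

section Colon

variable (M : Submonoid A) [IsLocalization M Λ] {I I' K : Ideal A} {y : A}
  (hy : ∀ f, y * f ∈ I ↔ f ∈ I')
include M hy

lemma algebraMap_mul_mem_map_iff (f : Λ) :
    algebraMap A Λ y * f ∈ I.map (algebraMap A Λ) ↔ f ∈ I'.map (algebraMap A Λ) := by
  obtain ⟨a, s, rfl⟩ := IsLocalization.exists_mk'_eq M f
  rw [IsLocalization.mul_mk'_eq_mk'_of_mul, IsLocalization.mk'_mem_map_algebraMap_iff,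
    IsLocalization.mk'_mem_map_algebraMap_iff]
  simp_rw [← hy, mul_left_comm y]

lemma exists_exact_map_of_mul_mem_iff (hK : I ⊔ Ideal.span {y} = K) :
    ∃ (f : (Λ ⧸ I'.map (algebraMap A Λ)) →ₗ[Λ] (Λ ⧸ I.map (algebraMap A Λ)))
      (g : (Λ ⧸ I.map (algebraMap A Λ)) →ₗ[Λ] (Λ ⧸ K.map (algebraMap A Λ))),
      Function.Injective f ∧ Function.Surjective g ∧ Function.Exact f g :=
  exists_exact_of_mul_mem_iff (algebraMap_mul_mem_map_iff M hy)
    (by rw [← hK, Ideal.map_sup, Ideal.map_span, Set.image_singleton])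

end Colon

variable [IsLocalRing Λ]

variable (Λ) in
/-- The lower bound `t - c` for the depth of `Λ/IΛ`, in its `Ext` form: `Ext^i(k, Λ/IΛ)` vanishes
for `i < t - c`. In the applications `t` is the depth of `Λ` and `c` bounds the depth lost by
passing to `Λ/IΛ`; the condition is written `i + c < t` to avoid truncated subtraction. -/
def ExtVanishes (t c : ℕ) (I : Ideal A) : Prop :=
  ∀ i, i + c < t → extLength Λ (ResidueField Λ) (Λ ⧸ I.map (algebraMap A Λ)) i = 0

variable {t c : ℕ} {I I' K : Ideal A} {y : A}

lemma ExtVanishes.mono {c' : ℕ} (h : ExtVanishes Λ t c I) (hc : c ≤ c') : ExtVanishes Λ t c' I :=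
  fun i hi ↦ h i (by omega)

lemma extVanishes_top : ExtVanishes Λ t c (⊤ : Ideal A) := fun i _ ↦ by
  have : Subsingleton (Λ ⧸ (⊤ : Ideal A).map (algebraMap A Λ)) := by
    rw [Ideal.map_top]
    infer_instance
  exact extLength_of_subsingleton_right _ _ i

section Localization

variable (M : Submonoid A) [IsLocalization M Λ]
include M

section Colon

variable (hy : ∀ f, y * f ∈ I ↔ f ∈ I') (hK : I ⊔ Ideal.span {y} = K)
include hy hK

lemma ExtVanishes.extLength_colon_le (hZ : ExtVanishes Λ t c K) {i : ℕ} (hi : i + c ≤ t) :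
    extLength Λ (ResidueField Λ) (Λ ⧸ I'.map (algebraMap A Λ)) i ≤
      extLength Λ (ResidueField Λ) (Λ ⧸ I.map (algebraMap A Λ)) i := by
  obtain ⟨f, g, hf, hg, hfg⟩ := exists_exact_map_of_mul_mem_iff (Λ := Λ) M hy hK
  cases i with
  | zero => exact extLength_zero_le_of_injective f hf _
  | succ i =>
    refine (extLength_covariant_left_le f g hf hg hfg _ i).trans ?_
    rw [hZ i (by omega), zero_add]

lemma ExtVanishes.colon (hY : ExtVanishes Λ t c I) (hZ : ExtVanishes Λ t (c + 1) K) :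
    ExtVanishes Λ t c I' := fun i hi ↦
  le_zero_iff.mp ((hZ.extLength_colon_le M hy hK (by omega)).trans (hY i hi).le)

lemma ExtVanishes.of_colon (hX : ExtVanishes Λ t c I') (hZ : ExtVanishes Λ t c K) :
    ExtVanishes Λ t c I := fun i hi ↦ by
  obtain ⟨f, g, hf, hg, hfg⟩ := exists_exact_map_of_mul_mem_iff (Λ := Λ) M hy hK
  have := extLength_covariant_mid_le f g hf hg hfg (ResidueField Λ) i
  rwa [hX i hi, hZ i hi, add_zero, le_zero_iff] at this

end Colon

lemma IsRegularlyGenerated.extLength_quotient_le {r d : ℕ} (hI : IsRegularlyGenerated I r)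
    (hΛ : ∀ i < d + r, extLength Λ (ResidueField Λ) Λ i = 0) :
    (∀ i < d, extLength Λ (ResidueField Λ) (Λ ⧸ I.map (algebraMap A Λ)) i = 0) ∧
      extLength Λ (ResidueField Λ) (Λ ⧸ I.map (algebraMap A Λ)) d ≤
        extLength Λ (ResidueField Λ) Λ (d + r) := by
  obtain ⟨rs, rfl, rfl, hrs⟩ := hI
  obtain ⟨h0, h1⟩ := extLength_quotient_le_of_isWeaklyRegular (N := ResidueField Λ) (j := d)
    (hrs.of_isLocalization Λ M) (by simpa using hΛ)
  have e : (Λ ⧸ (Ideal.ofList (rs.map (algebraMap A Λ)) • ⊤ : Submodule Λ Λ)) ≃ₗ[Λ]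
      (Λ ⧸ (Ideal.ofList rs).map (algebraMap A Λ)) :=
    Submodule.quotEquivOfEq _ _ (by rw [smul_eq_mul, Ideal.mul_top, Ideal.map_ofList])
  simp_rw [extLength_congr_right e] at h0 h1
  exact ⟨h0, by simpa using h1⟩

lemma IsRegularlyGenerated.extVanishes {r : ℕ} (hI : IsRegularlyGenerated I r)
    (hΛ : ∀ i < t, extLength Λ (ResidueField Λ) Λ i = 0) : ExtVanishes Λ t r I := fun i hi ↦
  (hI.extLength_quotient_le (Λ := Λ) M (d := t - r) fun j hj ↦ hΛ j (by omega)).1 i (by omega)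

end Localization

section HunekeUlrich

variable {n : ℕ} [Algebra (HURing n) Λ] (M : Submonoid (HURing n)) [IsLocalization M Λ]
  (hΛ : ∀ i < t, extLength Λ (ResidueField Λ) Λ i = 0)
include M hΛ

lemma extVanishes_blockIdeal_and_rowIdeal {p : ℕ} (hp : p ≤ 2 * n) :
    ExtVanishes Λ t (2 * n - 1) (blockIdeal n p) ∧ ExtVanishes Λ t (2 * n) (rowIdeal n p p) := by
  have hcoord : ExtVanishes Λ t (2 * n) (coordIdeal n 0) :=
    (isRegularlyGenerated_coordIdeal (Nat.zero_le _)).extVanishes M hΛ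
  induction p with
  | zero =>
    rw [blockIdeal_zero, rowIdeal_zero]
    exact ⟨extVanishes_top, hcoord⟩
  | succ p ih =>
    obtain ⟨-, hrow⟩ := ih (by omega)
    have hrow' : ExtVanishes Λ t (2 * n - 1) (rowIdeal n (p + 1) p) :=
      ((isRegularlyGenerated_rowIdeal (by omega) le_rfl).extVanishes M hΛ).mono (by omega)
    have hblock : ExtVanishes Λ t (2 * n - 1) (blockIdeal n (p + 1)) :=
      hrow'.colon M (fun _ ↦ revV_mul_mem_rowIdeal_iff (by omega)) (rowIdeal_coord_succ p p)
        (hrow.mono (by omega))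
    refine ⟨hblock, ?_⟩
    rcases Nat.even_or_odd (p + 1) with he | ho
    · exact hcoord.of_colon M (fun _ ↦ blockPf_mul_mem_rowIdeal_iff he hp) rfl
        (hblock.mono (by omega))
    · rw [← blockIdeal_of_odd ho]
      exact hblock.mono (by omega)

theorem extLength_huIdeal_le (hn : 0 < n) {d : ℕ} (hd : d + (2 * n - 1) = t) :
    (∀ i < d, extLength Λ (ResidueField Λ) (Λ ⧸ (huIdeal n).map (algebraMap (HURing n) Λ)) i = 0) ∧
      extLength Λ (ResidueField Λ) (Λ ⧸ (huIdeal n).map (algebraMap (HURing n) Λ)) d ≤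
        extLength Λ (ResidueField Λ) Λ t := by
  have hp : 2 * n - 1 + 1 = 2 * n := by omega
  rw [← blockIdeal_two_mul]
  refine ⟨fun i hi ↦ (extVanishes_blockIdeal_and_rowIdeal M hΛ le_rfl).1 i (by omega), ?_⟩
  have hZ := (extVanishes_blockIdeal_and_rowIdeal (Λ := Λ) M hΛ (p := 2 * n - 1) (by omega)).1
  rw [blockIdeal_of_odd ((Nat.odd_sub' (by omega)).mpr (by simp))] at hZ
  have hcolon := hZ.extLength_colon_le M (fun _ ↦ revV_mul_mem_rowIdeal_iff (by omega))
    (rowIdeal_coord_succ _ _) hd.le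
  rw [hp] at hcolon
  subst hd
  exact hcolon.trans (isRegularlyGenerated_rowIdeal_two_mul.extLength_quotient_le M hΛ).2

end HunekeUlrich

end DepthChain

section LocalizedQuotient

open IsLocalRing

section QuotientLocalRingHom

variable {A : Type*} [CommRing A] (J : Ideal A) (P : Ideal (A ⧸ J)) [P.IsPrime]

/-- The canonical map from the localization of `A` at the preimage of `P` to `(A ⧸ J)_P`. It
presents the localized quotient as a quotient of a localization of `A`. -/
noncomputable def quotientLocalRingHom :
    Localization.AtPrime (P.comap (Ideal.Quotient.mk J)) →+* Localization.AtPrime P :=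
  Localization.localRingHom _ P (Ideal.Quotient.mk J) rfl

lemma quotientLocalRingHom_surjective : Function.Surjective (quotientLocalRingHom J P) := by
  intro y
  obtain ⟨b, ⟨s, hs⟩, rfl⟩ := IsLocalization.exists_mk'_eq P.primeCompl y
  obtain ⟨b, rfl⟩ := Ideal.Quotient.mk_surjective b
  obtain ⟨s, rfl⟩ := Ideal.Quotient.mk_surjective s
  exact ⟨IsLocalization.mk' _ b ⟨s, hs⟩, Localization.localRingHom_mk' _ _ _ _ _ _⟩

lemma ker_quotientLocalRingHom :
    RingHom.ker (quotientLocalRingHom J P) = J.map (algebraMap A _) := by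
  ext x
  obtain ⟨a, ⟨s, hs⟩, rfl⟩ :=
    IsLocalization.exists_mk'_eq (P.comap (Ideal.Quotient.mk J)).primeCompl x
  rw [RingHom.mem_ker, quotientLocalRingHom, Localization.localRingHom_mk',
    IsLocalization.mk'_eq_zero_iff, IsLocalization.mk'_mem_map_algebraMap_iff]
  constructor
  · rintro ⟨⟨c, hc⟩, h⟩
    obtain ⟨c, rfl⟩ := Ideal.Quotient.mk_surjective c
    exact ⟨c, hc, Ideal.Quotient.eq_zero_iff_mem.mp (by rwa [map_mul])⟩
  · rintro ⟨c, hc, h⟩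
    exact ⟨⟨Ideal.Quotient.mk J c, hc⟩, by rw [← map_mul, Ideal.Quotient.eq_zero_iff_mem.mpr h]⟩

end QuotientLocalRingHom

lemma exists_ringKrullDim_eq_natCast (Γ : Type*) [CommRing Γ] [IsLocalRing Γ]
    [IsNoetherianRing Γ] : ∃ d : ℕ, ringKrullDim Γ = d := by
  obtain ⟨d, hd⟩ := ENat.ne_top_iff_exists.mp (maximalIdeal Γ).height_ne_top_of_isPrime
  exact ⟨d, by rw [← maximalIdeal_height_eq_ringKrullDim, ← hd]; rfl⟩

lemma IsRegularlyGenerated.ringKrullDim_quotient_add {A Λ : Type*} [CommRing A] [CommRing Λ]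
    [Algebra A Λ] {I Q : Ideal A} [Q.IsPrime] [IsLocalization.AtPrime Λ Q] [IsLocalRing Λ]
    [IsNoetherianRing Λ] {r : ℕ} (hI : IsRegularlyGenerated I r) (hIQ : I ≤ Q) :
    ringKrullDim (Λ ⧸ I.map (algebraMap A Λ)) + r = ringKrullDim Λ := by
  obtain ⟨rs, rfl, rfl, hrs⟩ := hI
  have := ringKrullDim_add_length_eq_ringKrullDim_of_isRegular _
    (hrs.isRegular_of_isLocalization_of_mem Λ Q fun x hx ↦ hIQ (Ideal.subset_span hx))
  rwa [List.length_map, ← Ideal.map_ofList] at this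

section Surjective

variable {n : ℕ} {Λ Γ : Type} [CommRing Λ] [Algebra (HURing n) Λ] (Q : Ideal (HURing n))
  [Q.IsPrime] [IsLocalization.AtPrime Λ Q] (hQ : huIdeal n ≤ Q) [CommRing Γ] [IsLocalRing Γ]
  [Algebra Λ Γ] (hsurj : Function.Surjective (algebraMap Λ Γ))
  (hker : RingHom.ker (algebraMap Λ Γ) = (huIdeal n).map (algebraMap (HURing n) Λ))
include Q hQ hsurj hker

lemma exists_ringKrullDim_eq_add_and_le [IsLocalRing Λ] [IsNoetherianRing Λ] :
    ∃ d : ℕ, ringKrullDim Λ = (d + (2 * n - 1) : ℕ) ∧ ringKrullDim Γ ≤ d := by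
  let I := (rowIdeal n (2 * n) (2 * n - 1)).map (algebraMap (HURing n) Λ)
  have hlift : ∀ x ∈ I, algebraMap Λ Γ x = 0 := fun x hx ↦
    hker.ge (Ideal.map_mono rowIdeal_two_mul_le_huIdeal hx)
  have hφ := Ideal.Quotient.lift_surjective_of_surjective I hlift hsurj
  have : Nontrivial (Λ ⧸ I) := (Ideal.Quotient.lift I _ hlift).domain_nontrivial
  have : IsLocalRing (Λ ⧸ I) := .of_surjective' _ (Ideal.Quotient.mk_surjective (I := I))
  obtain ⟨d, hd⟩ := exists_ringKrullDim_eq_natCast (Λ ⧸ I)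
  refine ⟨d, ?_, hd ▸ ringKrullDim_le_of_surjective _ hφ⟩
  rw [← isRegularlyGenerated_rowIdeal_two_mul.ringKrullDim_quotient_add
    (rowIdeal_two_mul_le_huIdeal.trans hQ) (Λ := Λ), hd]
  push_cast
  rfl

lemma isGorensteinLocalRing_of_ker_eq [IsRegularLocalRing Λ] (hn : 0 < n) :
    IsGorensteinLocalRing Γ := by
  let e : (Λ ⧸ (huIdeal n).map (algebraMap (HURing n) Λ)) ≃ₗ[Λ] Γ :=
    (Submodule.quotEquivOfEq _ _ hker.symm).trans
      ((Algebra.linearMap Λ Γ).quotKerEquivOfSurjective hsurj)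
  obtain ⟨d, hdimΛ, hdimΓ⟩ := exists_ringKrullDim_eq_add_and_le Q hQ hsurj hker
  obtain ⟨hlow, htop⟩ := extLength_residueField_self_of_isRegularLocalRing hdimΛ
  obtain ⟨hlow', htop'⟩ := extLength_huIdeal_le Q.primeCompl hlow hn rfl
  simp_rw [extLength_congr_right e] at hlow' htop'
  exact isGorensteinLocalRing_of_surjective hsurj hlow' (htop'.trans htop) hdimΓ

end Surjective

theorem isGorensteinLocalRing_localization {n : ℕ} (hn : 0 < n)
    (P : Ideal (HURing n ⧸ huIdeal n)) [P.IsPrime] :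
    IsGorensteinLocalRing (Localization.AtPrime P) := by
  let := (quotientLocalRingHom (huIdeal n) P).toAlgebra
  refine isGorensteinLocalRing_of_ker_eq (P.comap (Ideal.Quotient.mk (huIdeal n)))
    (fun x hx ↦ ?_) (quotientLocalRingHom_surjective (huIdeal n) P)
    (ker_quotientLocalRingHom (huIdeal n) P) hn
  rw [Ideal.mem_comap, Ideal.Quotient.eq_zero_iff_mem.mpr hx]
  exact zero_mem P

end LocalizedQuotient

/-- The Huneke–Ulrich ideal `J`, generated by the Pfaffian of the generic alternating
`2n × 2n` matrix `Φ` together with the `2n` entries of `Φv` for a generic vector `v`,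
has grade `2n-1`, is minimally generated by `2n+1` elements, and `A/J` is Gorenstein
(all its localizations at primes are Gorenstein local rings); in particular `J` has
deviation 2. -/
theorem huneke_ulrich_ideal_properties (n : ℕ) (hn : 2 ≤ n) :
    gradeIs (HURing n) (huIdeal n) (2*n-1) ∧
    (∀ s : Finset (HURing n), Ideal.span (s : Set (HURing n)) = huIdeal n →
      2*n+1 ≤ s.card) ∧
    ∀ (P : Ideal (HURing n ⧸ huIdeal n)) (_ : P.IsPrime),
      IsGorensteinLocalRing (Localization.AtPrime P) :=
  ⟨gradeIs_huIdeal (by omega), fun s hs ↦ two_mul_add_one_le_card hn s hs,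
    fun P _ ↦ isGorensteinLocalRing_localization (by omega) P⟩
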